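/- arXiv:2404.04119 — 2 statements merged into one kernel-verified Lean document; each statement's English description precedes it below -/
import Mathlib

section
/- Let X and Y be real Banach spaces and F : ℝ × X → Y a C¹ map. Assume: (1) for every (λ,u) ∈ ℝ × X the partial derivative D_u F(λ,u) : X → Y is a Fredholm operator of index 0; (2) F is proper on every closed bounded subset of ℝ × X; (3) u = u₀ is the unique solution of F(λ₀,u) = 0; (4) D_u F(λ₀,u₀) : X → Y is bijective. Then the set S contains a pair of unbounded connected components C⁺ and C⁻, contained in [λ₀,∞) × X and (−∞,λ₀] × X respectively, such that C⁺ ∩ C⁻ = {(λ₀,u₀)}. -/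
open Set Bornology

/-- A bounded linear operator between real normed spaces is Fredholm of index `0`:
its kernel is finite dimensional, its range is closed, and the dimension of the kernel
equals the (finite) codimension of the range. -/
def IsFredholmIndexZero {X Y : Type*} [NormedAddCommGroup X] [NormedSpace ℝ X]
    [NormedAddCommGroup Y] [NormedSpace ℝ Y] (T : X →L[ℝ] Y) : Prop :=
  FiniteDimensional ℝ (LinearMap.ker (T : X →ₗ[ℝ] Y)) ∧
  IsClosed (LinearMap.range (T : X →ₗ[ℝ] Y) : Set Y) ∧
  FiniteDimensional ℝ (Y ⧸ LinearMap.range (T : X →ₗ[ℝ] Y)) ∧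
  Module.finrank ℝ (LinearMap.ker (T : X →ₗ[ℝ] Y)) = Module.finrank ℝ (Y ⧸ LinearMap.range (T : X →ₗ[ℝ] Y))

open MeasureTheory Filter Topology

theorem sum_inv_prod_sub_eq_zero {n : ℕ} (hn : n ≠ 0) {t : ℕ → ℝ} (ht : Function.Injective t) :
    ∑ i ∈ Finset.range (n + 1), 1 / ∏ j ∈ (Finset.range (n + 1)).erase i, (t i - t j) = 0 := by
  have h := Lagrange.coeff_eq_sum (s := Finset.range (n + 1)) (ht.injOn) (P := (1 : Polynomial ℝ))
    (by rw [Polynomial.degree_one, Finset.card_range]; exact_mod_cast Nat.succ_pos n)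
  rw [Finset.card_range, Nat.add_sub_cancel, Polynomial.coeff_one, if_neg hn] at h
  simpa using h.symm

/-- The determinant of `A` is the leading coefficient of `t ↦ det (1 + t • A)`, and is therefore a
fixed linear combination of the values at `n + 1` nodes. -/
theorem det_eq_sum_det_one_add_smul {E : Type*} [NormedAddCommGroup E] [NormedSpace ℝ E]
    [FiniteDimensional ℝ E] {t : ℕ → ℝ} (ht : Function.Injective t) (A : E →L[ℝ] E) :
    A.det = ∑ i ∈ Finset.range (Module.finrank ℝ E + 1),
      (1 + t i • A : E →L[ℝ] E).det /
        ∏ j ∈ (Finset.range (Module.finrank ℝ E + 1)).erase i, (t i - t j) := by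
  classical
  let b := Module.finBasis ℝ E
  let M := LinearMap.toMatrix b b (A : E →ₗ[ℝ] E)
  let P : Polynomial ℝ := Matrix.det ((Polynomial.X : Polynomial ℝ) • M.map Polynomial.C +
    (1 : Matrix _ _ ℝ).map Polynomial.C)
  have hcoeff : P.coeff (Module.finrank ℝ E) = A.det := by
    have := Polynomial.coeff_det_X_add_C_card M 1
    rw [Fintype.card_fin] at this
    rw [this, LinearMap.det_toMatrix]
  have hdeg : P.degree < (Finset.range (Module.finrank ℝ E + 1)).card := by
    rw [Finset.card_range]
    refine lt_of_le_of_lt Polynomial.degree_le_natDegree ?_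
    have := Polynomial.natDegree_det_X_add_C_le M 1
    rw [Fintype.card_fin] at this
    exact_mod_cast Nat.lt_succ_of_le this
  have hev : ∀ s : ℝ, P.eval s = (1 + s • A : E →L[ℝ] E).det := by
    intro s
    have h1 : P.eval s = Matrix.det (s • M + 1) := by
      simp only [P, ← Polynomial.coe_evalRingHom, RingHom.map_det]
      congr 1
      ext i j
      by_cases hij : i = j <;> simp [hij] <;> ring
    rw [h1, ContinuousLinearMap.det, ← LinearMap.det_toMatrix b]
    congr 1
    have h2 : ((1 + s • A : E →L[ℝ] E) : E →ₗ[ℝ] E) = LinearMap.id + s • (A : E →ₗ[ℝ] E) := rfl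
    rw [h2, map_add, map_smul, LinearMap.toMatrix_id, add_comm]
  have h := Lagrange.coeff_eq_sum (ht.injOn) hdeg
  rw [Finset.card_range, Nat.add_sub_cancel, hcoeff] at h
  rw [h]
  exact Finset.sum_congr rfl fun i _ => by rw [hev]

theorem bijective_id_add_of_lipschitzWith {E : Type*} [NormedAddCommGroup E] [CompleteSpace E]
    {g : E → E} {K : NNReal} (hK : K < 1) (hg : LipschitzWith K g) :
    Function.Bijective fun x => x + g x := by
  refine ⟨fun x y hxy => ?_, fun y => ?_⟩
  · have h1 := hg.dist_le_mul x y
    have h2 : dist x y = dist (g x) (g y) := by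
      have : x - y = g y - g x := by
        have hxy' : x + g x = y + g y := hxy
        rw [sub_eq_sub_iff_add_eq_add, hxy', add_comm]
      rw [dist_eq_norm, this, ← dist_eq_norm, dist_comm]
    rw [h2] at h1
    have hK' : (K : ℝ) < 1 := by exact_mod_cast hK
    have h3 : dist x y = 0 := by
      rw [h2]
      rw [← h2] at h1
      nlinarith [dist_nonneg (x := x) (y := y)]
    exact dist_eq_zero.1 h3
  · have hc : ContractingWith K fun x => y - g x :=
      ⟨hK, LipschitzWith.of_dist_le_mul fun a b => by
        rw [dist_sub_left]; exact hg.dist_le_mul a b⟩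
    refine ⟨hc.fixedPoint, ?_⟩
    have := hc.fixedPoint_isFixedPt
    have h : y - g hc.fixedPoint = hc.fixedPoint := this
    exact (sub_eq_iff_eq_add.1 h).symm

theorem setIntegral_det_one_add_fderiv {E : Type*} [NormedAddCommGroup E] [NormedSpace ℝ E]
    [FiniteDimensional ℝ E] [MeasurableSpace E] [BorelSpace E] (μ : Measure E)
    [μ.IsAddHaarMeasure] {H : E → E} (hH : Differentiable ℝ H) {K : NNReal} (hK : K < 1)
    (hlip : LipschitzWith K H) {B : Set E} (hB : MeasurableSet B) (hsupp : ∀ x, x ∉ B → H x = 0)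
    (hdet : ∀ x, 0 < (1 + fderiv ℝ H x : E →L[ℝ] E).det) :
    ∫ x in B, (1 + fderiv ℝ H x : E →L[ℝ] E).det ∂μ = μ.real B := by
  have hbij := bijective_id_add_of_lipschitzWith hK hlip
  have himg : (fun x => x + H x) '' B = B := by
    have h1 : (fun x => x + H x) '' Bᶜ = Bᶜ := by
      have : EqOn (fun x => x + H x) id Bᶜ := fun x hx => by simp [hsupp x hx]
      rw [this.image_eq, image_id]
    rw [← compl_inj_iff, ← image_compl_eq hbij, h1]
  have hder : ∀ x ∈ B, HasFDerivWithinAt (fun x => x + H x) (1 + fderiv ℝ H x : E →L[ℝ] E) B x :=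
    fun x _ => ((hasFDerivAt_id x).add (hH x).hasFDerivAt).hasFDerivWithinAt
  have h := integral_image_eq_integral_abs_det_fderiv_smul μ hB hder (hbij.injective.injOn)
    (fun _ => (1 : ℝ))
  rw [himg] at h
  simp only [smul_eq_mul, mul_one, abs_of_pos (hdet _)] at h
  rw [← h]
  simp

/-- The Jacobian determinant of a compactly supported `C¹` map has integral zero. -/
theorem integral_det_fderiv_eq_zero {E : Type*} [NormedAddCommGroup E] [NormedSpace ℝ E]
    [FiniteDimensional ℝ E] [Nontrivial E] [MeasurableSpace E] [BorelSpace E] (μ : Measure E)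
    [μ.IsAddHaarMeasure] {H : E → E} (hH : ContDiff ℝ 1 H) (hc : HasCompactSupport H) :
    ∫ x, (fderiv ℝ H x).det ∂μ = 0 := by
  obtain ⟨K, hlip⟩ := ContDiff.lipschitzWith_of_hasCompactSupport hc hH one_ne_zero
  have hn : Module.finrank ℝ E ≠ 0 := Module.finrank_pos.ne'
  have hcont : Continuous (fun A : E →L[ℝ] E => A.det) := ContinuousLinearMap.continuous_det
  have hnear : ∀ᶠ A : E →L[ℝ] E in 𝓝 0, 0 < (1 + A).det := by
    have : Tendsto (fun A : E →L[ℝ] E => (1 + A).det) (𝓝 0) (𝓝 (1 + 0 : E →L[ℝ] E).det) :=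
      (hcont.comp (continuous_const.add continuous_id)).tendsto 0
    refine this.eventually (lt_mem_nhds ?_)
    simp [ContinuousLinearMap.det]
  obtain ⟨δ, hδ, hball⟩ := Metric.eventually_nhds_iff.1 hnear
  obtain ⟨a, ha, ha1, haδ⟩ : ∃ a : ℝ, 0 < a ∧ (∀ i ∈ Finset.range (Module.finrank ℝ E + 1),
      i * a * K < 1) ∧ (∀ i ∈ Finset.range (Module.finrank ℝ E + 1), i * a * K < δ) := by
    have hden : 0 < (Module.finrank ℝ E + 1 : ℝ) * (K + 1) := by positivity
    refine ⟨min 1 δ / ((Module.finrank ℝ E + 1) * (K + 1)), by positivity, ?_, ?_⟩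
    all_goals
      intro i hi
      have hi' : (i : ℝ) < Module.finrank ℝ E + 1 := by exact_mod_cast Finset.mem_range.1 hi
      have hm : 0 < min 1 δ := by positivity
      have hKn : (0 : ℝ) ≤ K := K.2
      have h1 : (i : ℝ) * K < (Module.finrank ℝ E + 1) * (K + 1) := by
        nlinarith [Nat.cast_nonneg (α := ℝ) i]
      have h2 : i * (min 1 δ / ((Module.finrank ℝ E + 1) * (K + 1))) * K < min 1 δ := by
        rw [mul_div_assoc', div_mul_eq_mul_div, div_lt_iff₀ hden]
        nlinarith
    · exact h2.trans_le (min_le_left _ _)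
    · exact h2.trans_le (min_le_right _ _)
  let t : ℕ → ℝ := fun i => i * a
  have ht : Function.Injective t := fun i j hij => by
    have : (i : ℝ) = j := mul_right_cancel₀ ha.ne' hij
    exact_mod_cast this
  have hB : MeasurableSet (tsupport H) := (isClosed_tsupport H).measurableSet
  have hBfin : μ (tsupport H) < ⊤ := hc.isCompact.measure_lt_top
  have hdH : Continuous (fderiv ℝ H) := hH.continuous_fderiv one_ne_zero
  have hval : ∀ i ∈ Finset.range (Module.finrank ℝ E + 1),
      ∫ x in tsupport H, (1 + t i • fderiv ℝ H x : E →L[ℝ] E).det ∂μ = μ.real (tsupport H) := by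
    intro i hi
    have hti : 0 ≤ t i := by positivity
    have hd : Differentiable ℝ H := hH.differentiable one_ne_zero
    have hfd : ∀ x, fderiv ℝ (fun y => t i • H y) x = t i • fderiv ℝ H x := fun x =>
      fderiv_fun_const_smul (hd x) _
    have hlip' : LipschitzWith (Real.toNNReal (t i) * K) (fun y => t i • H y) := by
      refine LipschitzWith.of_dist_le_mul fun x y => ?_
      rw [dist_smul₀, Real.norm_of_nonneg hti, NNReal.coe_mul, Real.coe_toNNReal _ hti,
        mul_assoc (t i)]
      exact mul_le_mul_of_nonneg_left (hlip.dist_le_mul x y) hti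
    have := setIntegral_det_one_add_fderiv μ (H := fun y => t i • H y) (hd.const_smul (t i))
      (K := Real.toNNReal (t i) * K) (by
        rw [← NNReal.coe_lt_coe, NNReal.coe_mul, Real.coe_toNNReal _ hti]
        exact ha1 i hi) hlip' hB
      (fun x hx => by simp [image_eq_zero_of_notMem_tsupport hx]) (fun x => by
        apply hball
        rw [dist_zero_right, hfd, norm_smul, Real.norm_of_nonneg hti]
        refine lt_of_le_of_lt ?_ (haδ i hi)
        exact mul_le_mul_of_nonneg_left (norm_fderiv_le_of_lipschitz ℝ hlip) hti)
    simpa only [hfd] using this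
  have hzero : ∀ x, x ∉ tsupport H → (fderiv ℝ H x).det = 0 := by
    intro x hx
    have : fderiv ℝ H x = 0 := by
      by_contra h
      exact hx (support_fderiv_subset ℝ h)
    rw [this, ContinuousLinearMap.det]
    simp
  rw [← setIntegral_eq_integral_of_forall_compl_eq_zero hzero]
  rw [funext fun x => det_eq_sum_det_one_add_smul ht (fderiv ℝ H x)]
  rw [integral_finsetSum]
  · calc _ = ∑ i ∈ Finset.range (Module.finrank ℝ E + 1), μ.real (tsupport H) *
        (1 / ∏ j ∈ (Finset.range (Module.finrank ℝ E + 1)).erase i, (t i - t j)) := by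
          refine Finset.sum_congr rfl fun i hi => ?_
          rw [integral_div, hval i hi, mul_one_div]
      _ = 0 := by rw [← Finset.mul_sum, sum_inv_prod_sub_eq_zero hn ht, mul_zero]
  · intro i _
    refine Integrable.div_const ?_ _
    exact ((hcont.comp (continuous_const.add (hdH.const_smul (t i)))).continuousOn
      ).integrableOn_compact hc.isCompact

theorem IsCompact.finite_of_isolated {α : Type*} [TopologicalSpace α] {Z : Set α}
    (hZ : IsCompact Z) (h : ∀ z ∈ Z, ∃ U ∈ 𝓝 z, ∀ w ∈ U, w ∈ Z → w = z) : Z.Finite := by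
  choose! U hU hUZ using h
  obtain ⟨t, htZ, ht⟩ := hZ.elim_nhds_subcover U hU
  refine t.finite_toSet.subset fun w hw => ?_
  obtain ⟨z, hz, hwz⟩ := mem_iUnion₂.1 (ht hw)
  rw [hUZ z (htZ z hz) w hwz hw]
  exact hz

/-- A componentwise antiderivative of a bump function: its Jacobian determinant is a bump
function. -/
theorem exists_contDiff_det_fderiv_bump (n : ℕ) {δ : ℝ} (hδ : 0 < δ) :
    ∃ R : (Fin n → ℝ) → (Fin n → ℝ), ContDiff ℝ 1 R ∧ R 0 = 0 ∧
      Continuous (fun y => (fderiv ℝ R y).det) ∧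
      (∀ y, δ ≤ ‖y‖ → (fderiv ℝ R y).det = 0) ∧ 0 < ∫ y, (fderiv ℝ R y).det := by
  let ρ : ContDiffBump (0 : ℝ) := ⟨δ / 2, δ, by positivity, by linarith⟩
  let r : ℝ → ℝ := fun t => ∫ s in (0 : ℝ)..t, ρ s
  have hr : ∀ t, HasDerivAt r (ρ t) t := fun t =>
    intervalIntegral.integral_hasDerivAt_right (ρ.continuous.intervalIntegrable _ _)
      (ρ.continuous.stronglyMeasurableAtFilter _ _) ρ.continuous.continuousAt
  have hrC : ContDiff ℝ 1 r := by
    rw [contDiff_one_iff_deriv]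
    refine ⟨fun t => (hr t).differentiableAt, ?_⟩
    rw [show deriv r = ρ from funext fun t => (hr t).deriv]
    exact ρ.continuous
  let R : (Fin n → ℝ) → (Fin n → ℝ) := fun y i => r (y i)
  have hRC : ContDiff ℝ 1 R := contDiff_pi.2 fun i => hrC.comp (contDiff_apply ℝ ℝ i)
  have hR' : ∀ y, HasFDerivAt R (ContinuousLinearMap.pi fun i =>
      ρ (y i) • (ContinuousLinearMap.proj i : (Fin n → ℝ) →L[ℝ] ℝ)) y := fun y =>
    hasFDerivAt_pi.2 fun i => HasDerivAt.comp_hasFDerivAt (f := fun y : Fin n → ℝ => y i) y (hr (y i))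
      (hasFDerivAt_apply i y)
  have hdet : ∀ y, (fderiv ℝ R y).det = ∏ i, ρ (y i) := by
    intro y
    rw [(hR' y).fderiv, ContinuousLinearMap.det, ← LinearMap.det_toMatrix', ← Matrix.det_diagonal]
    congr 1
    ext i j
    by_cases hij : i = j
    · subst hij; simp [LinearMap.toMatrix'_apply]
    · simp [LinearMap.toMatrix'_apply, hij]
  have hzero : ∀ y, δ ≤ ‖y‖ → (fderiv ℝ R y).det = 0 := by
    intro y hy
    obtain ⟨i, hi⟩ : ∃ i, δ ≤ ‖y i‖ := by
      by_contra! h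
      exact absurd ((pi_norm_lt_iff hδ).2 h) (not_lt.2 hy)
    rw [hdet]
    exact Finset.prod_eq_zero (Finset.mem_univ i) (ρ.zero_of_le_dist (by simpa using hi))
  have hcont : Continuous (fun y => (fderiv ℝ R y).det) := by
    simp_rw [hdet]
    exact continuous_finsetProd _ fun i _ => ρ.continuous.comp (continuous_apply i)
  refine ⟨R, hRC, ?_, hcont, hzero, ?_⟩
  · ext i; simp [R, r]
  · refine hcont.integral_pos_of_hasCompactSupport_nonneg_nonzero (x := 0) ?_ ?_ ?_
    · refine HasCompactSupport.intro (isCompact_closedBall 0 δ) fun y hy => hzero y ?_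
      simpa using (not_le.1 fun h => hy (by simpa using h)).le
    · intro y
      simp only [Pi.zero_apply, hdet]
      exact Finset.prod_nonneg fun i _ => ρ.nonneg
    · rw [hdet]
      simp only [Pi.zero_apply, Finset.prod_const]
      rw [ρ.one_of_mem_closedBall (by simp [ρ]; positivity)]
      simp

/-- Near a nondegenerate zero, a `C¹` map is injective, open, and its Jacobian has constant sign. -/
theorem exists_nhds_injOn_of_det_ne_zero {E : Type*} [NormedAddCommGroup E] [NormedSpace ℝ E]
    [FiniteDimensional ℝ E] {h : E → E} (hh : ContDiff ℝ 1 h) {z : E}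
    (hz : (fderiv ℝ h z).det ≠ 0) {N : Set E} (hN : N ∈ 𝓝 z) :
    ∃ U, IsOpen U ∧ z ∈ U ∧ U ⊆ N ∧ InjOn h U ∧ h '' U ∈ 𝓝 (h z) ∧
      ∀ x ∈ U, SignType.sign (fderiv ℝ h x).det = SignType.sign (fderiv ℝ h z).det := by
  have hstrict : HasStrictFDerivAt h
      ((fderiv ℝ h z).toContinuousLinearEquivOfDetNeZero hz : E →L[ℝ] E) z := by
    rw [ContinuousLinearMap.coe_toContinuousLinearEquivOfDetNeZero]
    exact hh.contDiffAt.hasStrictFDerivAt one_ne_zero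
  let e := hstrict.toOpenPartialHomeomorph h
  have hcont : Continuous fun x => (fderiv ℝ h x).det :=
    ContinuousLinearMap.continuous_det.comp (hh.continuous_fderiv one_ne_zero)
  have hsign : {x | SignType.sign (fderiv ℝ h x).det = SignType.sign (fderiv ℝ h z).det} ∈ 𝓝 z := by
    rcases hz.lt_or_gt with hz | hz
    · filter_upwards [hcont.continuousAt.eventually (gt_mem_nhds hz)] with x hx
      rw [sign_neg hx, sign_neg hz]
    · filter_upwards [hcont.continuousAt.eventually (lt_mem_nhds hz)] with x hx
      rw [sign_pos hx, sign_pos hz]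
  have hsrc : e.source ∈ 𝓝 z := e.open_source.mem_nhds hstrict.mem_toOpenPartialHomeomorph_source
  obtain ⟨U, hUsub, hU, hzU⟩ := mem_nhds_iff.1 (inter_mem (inter_mem hN hsign) hsrc)
  refine ⟨U, hU, hzU, fun x hx => (hUsub hx).1.1, ?_, ?_, fun x hx => (hUsub hx).1.2⟩
  · exact e.injOn.mono fun x hx => (hUsub hx).2
  · exact (e.isOpen_image_of_subset_source hU fun x hx => (hUsub hx).2).mem_nhds ⟨z, hzU, rfl⟩

theorem setIntegral_comp_mul_det {E : Type*} [NormedAddCommGroup E] [NormedSpace ℝ E]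
    [FiniteDimensional ℝ E] [MeasurableSpace E] [BorelSpace E] (μ : Measure E)
    [μ.IsAddHaarMeasure] {h : E → E} (hh : ContDiff ℝ 1 h) {U : Set E} (hU : IsOpen U)
    (hinj : InjOn h U) {σ : SignType} (hsign : ∀ x ∈ U, SignType.sign (fderiv ℝ h x).det = σ)
    {ω : E → ℝ} (hω : ∀ y, y ∉ h '' U → ω y = 0) :
    ∫ x in U, ω (h x) * (fderiv ℝ h x).det ∂μ = (σ : ℝ) * ∫ y, ω y ∂μ := by
  have h1 := integral_image_eq_integral_abs_det_fderiv_smul μ hU.measurableSet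
    (fun x _ => ((hh.differentiable one_ne_zero) x).hasFDerivAt.hasFDerivWithinAt) hinj ω
  rw [setIntegral_eq_integral_of_forall_compl_eq_zero hω] at h1
  rw [h1, ← integral_const_mul]
  refine setIntegral_congr_fun hU.measurableSet fun x hx => ?_
  have h2 := sign_mul_abs (fderiv ℝ h x).det
  rw [hsign x hx] at h2
  simp only [smul_eq_mul]
  rw [← mul_assoc, h2, mul_comm]

/-- The integral of a bump function concentrated near the origin, pulled back by `h`, counts the
zeros of `h` in `W` with sign. -/
theorem exists_setIntegral_comp_mul_det_eq_sum_sign {E : Type*} [NormedAddCommGroup E]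
    [NormedSpace ℝ E] [FiniteDimensional ℝ E] [MeasurableSpace E] [BorelSpace E] (μ : Measure E)
    [μ.IsAddHaarMeasure] {h : E → E} (hh : ContDiff ℝ 1 h) {W : Set E} (hW : IsOpen W)
    (hWc : IsCompact (closure W)) {Z : Finset E} (hZ : ∀ x, x ∈ Z ↔ x ∈ W ∧ h x = 0)
    (hfr : ∀ x ∈ closure W, h x = 0 → x ∈ W) (hreg : ∀ x ∈ Z, (fderiv ℝ h x).det ≠ 0) :
    ∃ δ > 0, ∀ ω : E → ℝ, Continuous ω → (∀ y, δ ≤ ‖y‖ → ω y = 0) →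
      ∫ x in W, ω (h x) * (fderiv ℝ h x).det ∂μ =
        ((∑ z ∈ Z, (SignType.sign (fderiv ℝ h z).det : ℤ) : ℤ) : ℝ) * ∫ y, ω y ∂μ := by
  obtain ⟨N, hN, hNdisj⟩ := Z.finite_toSet.t2_separation
  have key : ∀ z ∈ Z, ∃ U, IsOpen U ∧ z ∈ U ∧ U ⊆ N z ∩ W ∧ InjOn h U ∧ h '' U ∈ 𝓝 (h z) ∧
      ∀ x ∈ U, SignType.sign (fderiv ℝ h x).det = SignType.sign (fderiv ℝ h z).det :=
    fun z hz => exists_nhds_injOn_of_det_ne_zero hh (hreg z hz)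
      (inter_mem ((hN z).2.mem_nhds (hN z).1) (hW.mem_nhds ((hZ z).1 hz).1))
  choose! U hUo hzU hUsub hUinj hUimg hUsign using key
  have hδ1 : ∀ᶠ δ : ℝ in 𝓝[>] 0, ∀ z ∈ Z, Metric.ball 0 δ ⊆ h '' U z := by
    rw [Filter.eventually_all_finset]
    intro z hz
    have := hUimg z hz
    rw [((hZ z).1 hz).2, Metric.mem_nhds_iff] at this
    obtain ⟨δ, hδ, hb⟩ := this
    filter_upwards [Ioo_mem_nhdsGT hδ] with d hd
    exact (Metric.ball_subset_ball hd.2.le).trans hb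
  have hK : IsCompact (closure W \ ⋃ z ∈ Z, U z) :=
    hWc.diff (isOpen_biUnion fun z hz => hUo z hz)
  have hδ2 : ∀ᶠ δ : ℝ in 𝓝[>] 0, ∀ x ∈ closure W \ ⋃ z ∈ Z, U z, δ ≤ ‖h x‖ := by
    rcases (closure W \ ⋃ z ∈ Z, U z).eq_empty_or_nonempty with he | hne
    · simp [he]
    · obtain ⟨x₀, hx₀, hmin⟩ := hK.exists_isMinOn hne hh.continuous.norm.continuousOn
      have hpos : 0 < ‖h x₀‖ := by
        rw [norm_pos_iff]
        intro h0
        have hz : x₀ ∈ Z := (hZ x₀).2 ⟨hfr x₀ hx₀.1 h0, h0⟩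
        exact hx₀.2 (mem_biUnion hz (hzU x₀ hz))
      filter_upwards [Ioo_mem_nhdsGT hpos] with d hd x hx
      exact hd.2.le.trans (hmin hx)
  obtain ⟨δ, ⟨hδ1, hδ2⟩, hδ⟩ := ((hδ1.and hδ2).and self_mem_nhdsWithin).exists
  refine ⟨δ, hδ, fun ω hωc hω => ?_⟩
  have hcont : Continuous fun x => ω (h x) * (fderiv ℝ h x).det :=
    (hωc.comp hh.continuous).mul
      (ContinuousLinearMap.continuous_det.comp (hh.continuous_fderiv one_ne_zero))
  have hUW : ⋃ z ∈ Z, U z ⊆ W := iUnion₂_subset fun z hz => (hUsub z hz).trans inter_subset_right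
  rw [setIntegral_eq_of_subset_of_forall_sdiff_eq_zero hW.measurableSet hUW fun x hx => by
    rw [hω _ (hδ2 x ⟨subset_closure hx.1, hx.2⟩), zero_mul]]
  rw [integral_biUnion_finset]
  · rw [Int.cast_sum, Finset.sum_mul]
    refine Finset.sum_congr rfl fun z hz => ?_
    rw [setIntegral_comp_mul_det μ hh (hUo z hz) (hUinj z hz) (hUsign z hz)]
    · cases SignType.sign (fderiv ℝ h z).det <;> simp
    · intro y hy
      refine hω y (not_lt.1 fun hlt => hy (hδ1 z hz ?_))
      simpa using hlt
  · exact fun z hz => (hUo z hz).measurableSet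
  · intro z hz w hw hzw
    exact (hNdisj hz hw hzw).mono ((hUsub z hz).trans inter_subset_left)
      ((hUsub w hw).trans inter_subset_left)
  · intro z hz
    exact (hcont.continuousOn.integrableOn_compact hWc).mono_set
      (((hUsub z hz).trans inter_subset_right).trans subset_closure)

theorem intCast_sum_sign_eq_card {ι : Type*} {s : Finset ι} {f : ι → ℝ} (hf : ∀ i ∈ s, f i ≠ 0) :
    ((∑ i ∈ s, (SignType.sign (f i) : ℤ) : ℤ) : ZMod 2) = s.card := by
  rw [Int.cast_sum, Finset.cast_card]
  refine Finset.sum_congr rfl fun i hi => ?_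
  rcases (hf i hi).lt_or_gt with h | h
  · rw [sign_neg h]; decide
  · rw [sign_pos h]; decide

theorem integral_det_fderiv_comp_eq_zero {n : ℕ} [NeZero n] {R k : (Fin n → ℝ) → (Fin n → ℝ)}
    (hR : ContDiff ℝ 1 R) (hR0 : R 0 = 0) (hk : ContDiff ℝ 1 k) (hc : HasCompactSupport k) :
    ∫ x, (fderiv ℝ R (k x)).det * (fderiv ℝ k x).det = 0 := by
  rw [← integral_det_fderiv_eq_zero volume (hR.comp hk) (hc.comp_left hR0)]
  refine integral_congr_ae (ae_of_all _ fun x => ?_)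
  simp only
  rw [fderiv_comp x (hR.differentiable one_ne_zero _) (hk.differentiable one_ne_zero _)]
  exact (LinearMap.det_comp _ _).symm

/-- The number of nondegenerate zeros modulo two of compactly supported `C¹` maps depends only on
their values near the boundary. -/
theorem card_zeros_eq_of_hasCompactSupport {n : ℕ} {k₀ k₁ : (Fin n → ℝ) → (Fin n → ℝ)}
    (hk₀ : ContDiff ℝ 1 k₀) (hk₁ : ContDiff ℝ 1 k₁) (hc₀ : HasCompactSupport k₀)
    (hc₁ : HasCompactSupport k₁) {W C : Set (Fin n → ℝ)} (hW : IsOpen W)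
    (hWc : IsCompact (closure W)) (hC : IsClosed C) (hCW : C ⊆ W)
    (heq : ∀ x, x ∉ C → k₀ x = k₁ x) (hfr₀ : ∀ x ∈ closure W, k₀ x = 0 → x ∈ W)
    {Z₀ Z₁ : Finset (Fin n → ℝ)} (hZ₀ : ∀ x, x ∈ Z₀ ↔ x ∈ W ∧ k₀ x = 0)
    (hZ₁ : ∀ x, x ∈ Z₁ ↔ x ∈ W ∧ k₁ x = 0) (hreg₀ : ∀ x ∈ Z₀, (fderiv ℝ k₀ x).det ≠ 0)
    (hreg₁ : ∀ x ∈ Z₁, (fderiv ℝ k₁ x).det ≠ 0) :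
    (Z₀.card : ZMod 2) = Z₁.card := by
  rcases Nat.eq_zero_or_pos n with rfl | hn
  · have : Z₀ = Z₁ := by
      ext x
      rw [hZ₀, hZ₁, Subsingleton.elim (k₀ x) (k₁ x)]
    rw [this]
  have : NeZero n := ⟨hn.ne'⟩
  have hfr₁ : ∀ x ∈ closure W, k₁ x = 0 → x ∈ W := by
    intro x hx h0
    by_cases hxC : x ∈ C
    · exact hCW hxC
    · exact hfr₀ x hx (by rw [heq x hxC, h0])
  obtain ⟨δ₀, hδ₀, h₀⟩ := exists_setIntegral_comp_mul_det_eq_sum_sign volume hk₀ hW hWc hZ₀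
    hfr₀ hreg₀
  obtain ⟨δ₁, hδ₁, h₁⟩ := exists_setIntegral_comp_mul_det_eq_sum_sign volume hk₁ hW hWc hZ₁
    hfr₁ hreg₁
  obtain ⟨R, hR, hR0, hRc, hRz, hRpos⟩ := exists_contDiff_det_fderiv_bump n (lt_min hδ₀ hδ₁)
  have e₀ := h₀ _ hRc fun y hy => hRz y ((min_le_left _ _).trans hy)
  have e₁ := h₁ _ hRc fun y hy => hRz y ((min_le_right _ _).trans hy)
  have hint : ∀ {k : (Fin n → ℝ) → (Fin n → ℝ)}, ContDiff ℝ 1 k → HasCompactSupport k →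
      Integrable fun x => (fderiv ℝ R (k x)).det * (fderiv ℝ k x).det := by
    intro k hk hc
    refine Continuous.integrable_of_hasCompactSupport ((hRc.comp hk.continuous).mul
      (ContinuousLinearMap.continuous_det.comp (hk.continuous_fderiv one_ne_zero))) ?_
    refine HasCompactSupport.mul_left ?_
    refine (hc.fderiv (𝕜 := ℝ)).comp_left (g := fun A : (Fin n → ℝ) →L[ℝ] (Fin n → ℝ) => A.det) ?_
    simp [ContinuousLinearMap.det]
  have hout : ∫ x in Wᶜ, (fderiv ℝ R (k₀ x)).det * (fderiv ℝ k₀ x).det =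
      ∫ x in Wᶜ, (fderiv ℝ R (k₁ x)).det * (fderiv ℝ k₁ x).det := by
    refine setIntegral_congr_fun hW.measurableSet.compl fun x hx => ?_
    have hxC : x ∉ C := fun h => hx (hCW h)
    have hev : k₀ =ᶠ[𝓝 x] k₁ := by
      filter_upwards [hC.isOpen_compl.mem_nhds hxC] with w hw using heq w hw
    rw [hev.eq_of_nhds, hev.fderiv_eq]
  have s₀ := integral_add_compl hW.measurableSet (hint hk₀ hc₀)
  have s₁ := integral_add_compl hW.measurableSet (hint hk₁ hc₁)
  rw [integral_det_fderiv_comp_eq_zero hR hR0 hk₀ hc₀, e₀] at s₀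
  rw [integral_det_fderiv_comp_eq_zero hR hR0 hk₁ hc₁, e₁, ← hout] at s₁
  have hsum := mul_right_cancel₀ hRpos.ne' (add_right_cancel (s₀.trans s₁.symm))
  rw [← intCast_sum_sign_eq_card hreg₀, ← intCast_sum_sign_eq_card hreg₁, Int.cast_injective hsum]

theorem finite_zeros_closedBall {E : Type*} [NormedAddCommGroup E] [NormedSpace ℝ E]
    [FiniteDimensional ℝ E] {h : E → E} {x₀ : E} {σ r : ℝ} (hσ : σ < r)
    (hh : ContDiffOn ℝ 1 h (Metric.ball x₀ r))
    (hreg : ∀ x ∈ Metric.ball x₀ r, h x = 0 → (fderiv ℝ h x).det ≠ 0) :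
    {x ∈ Metric.closedBall x₀ σ | h x = 0}.Finite := by
  have hsub : Metric.closedBall x₀ σ ⊆ Metric.ball x₀ r := Metric.closedBall_subset_ball hσ
  have hcomp : IsCompact {x ∈ Metric.closedBall x₀ σ | h x = 0} := by
    have := (hh.continuousOn.mono hsub).preimage_isClosed_of_isClosed Metric.isClosed_closedBall
      (isClosed_singleton (x := (0 : E)))
    exact (isCompact_closedBall x₀ σ).of_isClosed_subset this inter_subset_left
  refine hcomp.finite_of_isolated fun z hz => ?_
  have hdet := hreg z (hsub hz.1) hz.2
  have hstrict : HasStrictFDerivAt h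
      ((fderiv ℝ h z).toContinuousLinearEquivOfDetNeZero hdet : E →L[ℝ] E) z := by
    rw [ContinuousLinearMap.coe_toContinuousLinearEquivOfDetNeZero]
    exact (hh.contDiffAt (Metric.isOpen_ball.mem_nhds (hsub hz.1))).hasStrictFDerivAt one_ne_zero
  let e := hstrict.toOpenPartialHomeomorph h
  refine ⟨e.source, e.open_source.mem_nhds hstrict.mem_toOpenPartialHomeomorph_source,
    fun w hw hwZ => e.injOn hw hstrict.mem_toOpenPartialHomeomorph_source ?_⟩
  exact hwZ.2.trans hz.2.symm

theorem contDiff_bump_smul {E F : Type*} [NormedAddCommGroup E] [NormedSpace ℝ E]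
    [FiniteDimensional ℝ E] [NormedAddCommGroup F] [NormedSpace ℝ F] {h : E → F} {x₀ : E}
    (η : ContDiffBump x₀) {r : ℝ} (hr : η.rOut < r) (hh : ContDiffOn ℝ 1 h (Metric.ball x₀ r)) :
    ContDiff ℝ 1 fun x => η x • h x := by
  rw [contDiff_iff_contDiffAt]
  intro x
  by_cases hx : x ∈ Metric.ball x₀ r
  · exact η.contDiff.contDiffAt.smul (hh.contDiffAt (Metric.isOpen_ball.mem_nhds hx))
  · have hev : (fun x => η x • h x) =ᶠ[𝓝 x] fun _ => 0 := by
      have : x ∈ (Metric.closedBall x₀ η.rOut)ᶜ := fun h =>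
        hx (Metric.closedBall_subset_ball hr h)
      filter_upwards [Metric.isClosed_closedBall.isOpen_compl.mem_nhds this] with w hw
      rw [η.zero_of_le_dist (not_le.1 fun h => hw h).le, zero_smul]
    exact contDiffAt_const.congr_of_eventuallyEq hev

/-- Two `C¹` maps on a ball that agree outside a smaller concentric ball and have only
nondegenerate zeros have the same number of zeros modulo two in the smaller ball. -/
theorem ncard_zeros_closedBall_eq {n : ℕ} {h₀ h₁ : (Fin n → ℝ) → (Fin n → ℝ)} {x₀ : Fin n → ℝ}
    {σ r : ℝ} (hσ0 : 0 < σ) (hσ : σ < r) (hh₀ : ContDiffOn ℝ 1 h₀ (Metric.ball x₀ r))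
    (hh₁ : ContDiffOn ℝ 1 h₁ (Metric.ball x₀ r))
    (heq : ∀ x ∈ Metric.ball x₀ r, x ∉ Metric.closedBall x₀ σ → h₀ x = h₁ x)
    (hreg₀ : ∀ x ∈ Metric.ball x₀ r, h₀ x = 0 → (fderiv ℝ h₀ x).det ≠ 0)
    (hreg₁ : ∀ x ∈ Metric.ball x₀ r, h₁ x = 0 → (fderiv ℝ h₁ x).det ≠ 0) :
    ({x ∈ Metric.closedBall x₀ σ | h₀ x = 0}.ncard : ZMod 2) =
      {x ∈ Metric.closedBall x₀ σ | h₁ x = 0}.ncard := by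
  obtain ⟨r', hr', hr'r⟩ := exists_between hσ
  have hfin := finite_zeros_closedBall hr'r hh₀ hreg₀
  obtain ⟨ρ, ⟨hσρ, hρr'⟩, hρ⟩ : ∃ ρ ∈ Ioo σ r', ∀ x ∈ Metric.closedBall x₀ ρ, h₀ x = 0 →
      x ∈ Metric.closedBall x₀ σ := by
    have h1 : ∀ᶠ ρ in 𝓝[>] σ, ∀ x ∈ {x ∈ Metric.closedBall x₀ r' | h₀ x = 0},
        x ∈ Metric.closedBall x₀ ρ → x ∈ Metric.closedBall x₀ σ := by
      rw [Filter.eventually_all_finite hfin]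
      intro x _
      by_cases hx : x ∈ Metric.closedBall x₀ σ
      · exact Eventually.of_forall fun _ _ => hx
      · filter_upwards [Ioo_mem_nhdsGT (not_le.1 hx)] with ρ hρ hxρ
        exact absurd hxρ (not_le.2 hρ.2)
    obtain ⟨ρ, h2, hρ⟩ := (h1.and (Ioo_mem_nhdsGT hr')).exists
    exact ⟨ρ, hρ, fun x hx h0 => h2 x ⟨Metric.closedBall_subset_closedBall hρ.2.le hx, h0⟩ hx⟩
  have hρ0 : 0 < ρ := hσ0.trans hσρ
  let η : ContDiffBump x₀ := ⟨(ρ + r') / 2, r', by linarith, by linarith⟩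
  have hηone : ∀ x ∈ Metric.closedBall x₀ ρ, ∀ᶠ w in 𝓝 x, η w = 1 := by
    intro x hx
    have : x ∈ Metric.ball x₀ ((ρ + r') / 2) :=
      Metric.closedBall_subset_ball (by linarith) hx
    filter_upwards [Metric.isOpen_ball.mem_nhds this] with w hw
    exact η.one_of_mem_closedBall (Metric.ball_subset_closedBall hw)
  have hcl : closure (Metric.ball x₀ ρ) = Metric.closedBall x₀ ρ := closure_ball x₀ hρ0.ne'
  have hz : ∀ h : (Fin n → ℝ) → (Fin n → ℝ), ∀ x ∈ Metric.closedBall x₀ ρ,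
      (η x • h x = h x ∧ fderiv ℝ (fun w => η w • h w) x = fderiv ℝ h x) := by
    intro h x hx
    have hev : (fun w => η w • h w) =ᶠ[𝓝 x] h := by
      filter_upwards [hηone x hx] with w hw
      rw [hw, one_smul]
    exact ⟨hev.eq_of_nhds, hev.fderiv_eq⟩
  have hσb : Metric.closedBall x₀ σ ⊆ Metric.ball x₀ ρ := Metric.closedBall_subset_ball hσρ
  have hbb : Metric.ball x₀ ρ ⊆ Metric.ball x₀ r := Metric.ball_subset_ball (hρr'.trans hr'r).le
  have hsupp : ∀ h : (Fin n → ℝ) → (Fin n → ℝ), HasCompactSupport fun w => η w • h w :=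
    fun h => η.hasCompactSupport.smul_right
  have hρ1 : ∀ x ∈ Metric.closedBall x₀ ρ, h₁ x = 0 → x ∈ Metric.closedBall x₀ σ := by
    intro x hx h0
    by_contra hxσ
    refine hxσ (hρ x hx ?_)
    rw [heq x (Metric.closedBall_subset_ball (hρr'.trans hr'r) hx) hxσ, h0]
  have hfin₀ := finite_zeros_closedBall hσ hh₀ hreg₀
  have hfin₁ := finite_zeros_closedBall hσ hh₁ hreg₁
  rw [Set.ncard_eq_toFinset_card _ hfin₀, Set.ncard_eq_toFinset_card _ hfin₁]
  have hmem : ∀ h : (Fin n → ℝ) → (Fin n → ℝ),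
      (∀ x ∈ Metric.closedBall x₀ ρ, h x = 0 → x ∈ Metric.closedBall x₀ σ) →
      ∀ x, (x ∈ Metric.closedBall x₀ σ ∧ h x = 0) ↔ (x ∈ Metric.ball x₀ ρ ∧ η x • h x = 0) := by
    intro h hh x
    constructor
    · rintro ⟨h1, h2⟩
      exact ⟨hσb h1, by rw [h2, smul_zero]⟩
    · rintro ⟨h1, h2⟩
      rw [(hz h x (Metric.ball_subset_closedBall h1)).1] at h2
      exact ⟨hh x (Metric.ball_subset_closedBall h1) h2, h2⟩
  refine card_zeros_eq_of_hasCompactSupport (k₀ := fun w => η w • h₀ w)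
    (k₁ := fun w => η w • h₁ w) (W := Metric.ball x₀ ρ) (C := Metric.closedBall x₀ σ)
    (contDiff_bump_smul η hr'r hh₀) (contDiff_bump_smul η hr'r hh₁) (hsupp h₀) (hsupp h₁)
    Metric.isOpen_ball (hcl ▸ isCompact_closedBall x₀ ρ) Metric.isClosed_closedBall hσb
    ?_ ?_ ?_ ?_ ?_ ?_
  · intro x hx
    by_cases hxr : x ∈ Metric.ball x₀ r
    · simp only [heq x hxr hx]
    · have : η x = 0 := η.zero_of_le_dist (hr'r.le.trans (not_lt.1 hxr))
      simp [this]
  · intro x hx h0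
    rw [hcl] at hx
    exact hσb (hρ x hx ((hz h₀ x hx).1 ▸ h0))
  · exact fun x => (hfin₀.mem_toFinset).trans (hmem h₀ hρ x)
  · exact fun x => (hfin₁.mem_toFinset).trans (hmem h₁ hρ1 x)
  · intro x hx
    have hx' := hfin₀.mem_toFinset.1 hx
    rw [(hz h₀ x (Metric.ball_subset_closedBall (hσb hx'.1))).2]
    exact hreg₀ x (hbb (hσb hx'.1)) hx'.2
  · intro x hx
    have hx' := hfin₁.mem_toFinset.1 hx
    rw [(hz h₁ x (Metric.ball_subset_closedBall (hσb hx'.1))).2]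
    exact hreg₁ x (hbb (hσb hx'.1)) hx'.2

/-- Small regular values shared by finitely many `C¹` maps between balls of equal dimension. -/
theorem exists_norm_lt_forall_regular_value {ι E : Type*} [NormedAddCommGroup E] [NormedSpace ℝ E]
    [FiniteDimensional ℝ E] {s : Set ι} (hs : s.Finite) {h : ι → E → E}
    {B : ι → Set E} (hB : ∀ i ∈ s, IsOpen (B i)) (hh : ∀ i ∈ s, ContDiffOn ℝ 1 (h i) (B i))
    {δ : ℝ} (hδ : 0 < δ) :
    ∃ e : E, ‖e‖ < δ ∧ ∀ i ∈ s, ∀ x ∈ B i, h i x = e → (fderiv ℝ (h i) x).det ≠ 0 := by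
  borelize E
  let μ : Measure E := Measure.addHaar
  let bad : ι → Set E := fun i => h i '' {x ∈ B i | (fderiv ℝ (h i) x).det = 0}
  have hnull : ∀ i ∈ s, μ (bad i) = 0 := by
    intro i hi
    refine addHaar_image_eq_zero_of_det_fderivWithin_eq_zero μ (f' := fderiv ℝ (h i)) ?_
      fun x hx => hx.2
    intro x hx
    have := (hh i hi).contDiffAt ((hB i hi).mem_nhds hx.1)
    exact (this.differentiableAt one_ne_zero).hasFDerivAt.hasFDerivWithinAt
  have hall : μ (⋃ i ∈ s, bad i) = 0 := (measure_biUnion_null_iff hs.countable).2 hnull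
  have hpos : 0 < μ (Metric.ball (0 : E) δ) := Metric.measure_ball_pos μ 0 hδ
  obtain ⟨e, he, hne⟩ : ∃ e ∈ Metric.ball (0 : E) δ, e ∉ ⋃ i ∈ s, bad i := by
    by_contra! hcon
    exact hpos.ne' (measure_mono_null hcon hall)
  refine ⟨e, by simpa using he, fun i hi x hx hxe hdet => hne ?_⟩
  exact mem_biUnion hi ⟨x, ⟨hx, hdet⟩, hxe⟩

/-- A `C¹` parametrization of a relatively open piece of `M` by a ball of `ℝⁿ`, whose inverse is the
restriction of a continuous linear map. -/
structure SliceChart {X : Type*} [NormedAddCommGroup X] [NormedSpace ℝ X] (n : ℕ) (M : Set X) where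
  center : Fin n → ℝ
  radius : ℝ
  radius_pos : 0 < radius
  param : (Fin n → ℝ) → X
  coord : X →L[ℝ] (Fin n → ℝ)
  nbhd : Set X
  isOpen_nbhd : IsOpen nbhd
  contDiffOn_param : ContDiffOn ℝ 1 param (Metric.ball center radius)
  param_mem : ∀ x ∈ Metric.ball center radius, param x ∈ M
  coord_param : ∀ x ∈ Metric.ball center radius, coord (param x) = x
  param_mem_nbhd : ∀ x ∈ Metric.ball center radius, param x ∈ nbhd
  coord_mem : ∀ u ∈ nbhd, u ∈ M → coord u ∈ Metric.ball center radius
  param_coord : ∀ u ∈ nbhd, u ∈ M → param (coord u) = u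

/-- A map is `C¹` along `M` if near every point of `M` it is the restriction of a map that is `C¹`
there. -/
def ContDiffAlong {X E : Type*} [NormedAddCommGroup X] [NormedSpace ℝ X] [NormedAddCommGroup E]
    [NormedSpace ℝ E] (M : Set X) (s : X → E) : Prop :=
  ∀ u ∈ M, ∃ g : X → E, ContDiffAt ℝ 1 g u ∧ s =ᶠ[𝓝[M] u] g

namespace SliceChart

variable {X : Type*} [NormedAddCommGroup X] [NormedSpace ℝ X] {n : ℕ} {M : Set X}

theorem contDiffOn_comp_param (c : SliceChart n M) {E : Type*} [NormedAddCommGroup E]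
    [NormedSpace ℝ E] {s : X → E} (hs : ContDiffAlong M s) :
    ContDiffOn ℝ 1 (fun x => s (c.param x)) (Metric.ball c.center c.radius) := by
  intro x hx
  obtain ⟨g, hg, hev⟩ := hs (c.param x) (c.param_mem x hx)
  have hball := Metric.isOpen_ball.mem_nhds hx
  have hp : ContDiffAt ℝ 1 c.param x := c.contDiffOn_param.contDiffAt hball
  have htend : Tendsto c.param (𝓝 x) (𝓝[M] c.param x) := by
    refine tendsto_nhdsWithin_iff.2 ⟨hp.continuousAt, ?_⟩
    filter_upwards [hball] with w hw using c.param_mem w hw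
  exact ((hg.comp x hp).congr_of_eventuallyEq (htend.eventually hev)).contDiffWithinAt

/-- The bump function on the model ball of a chart. -/
noncomputable def bumpModel (c : SliceChart n M) : ContDiffBump c.center :=
  ⟨c.radius / 4, c.radius / 2, by linarith [c.radius_pos], by linarith [c.radius_pos]⟩

open Classical in
/-- The bump function of the model ball, transported to `X`. -/
noncomputable def bump (c : SliceChart n M) (u : X) : ℝ :=
  if u ∈ c.nbhd then c.bumpModel (c.coord u) else 0

theorem closedBall_half_subset (c : SliceChart n M) :
    Metric.closedBall c.center (c.radius / 2) ⊆ Metric.ball c.center c.radius :=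
  Metric.closedBall_subset_ball (by linarith [c.radius_pos])

theorem bump_mem_Icc (c : SliceChart n M) (u : X) : c.bump u ∈ Icc (0 : ℝ) 1 := by
  unfold bump
  split_ifs
  · exact ⟨c.bumpModel.nonneg, c.bumpModel.le_one⟩
  · exact ⟨le_rfl, zero_le_one⟩

theorem bump_eq_zero (c : SliceChart n M) {u : X} (hu : u ∈ M)
    (h : u ∉ c.param '' Metric.closedBall c.center (c.radius / 2)) : c.bump u = 0 := by
  unfold bump
  split_ifs with hN
  · refine c.bumpModel.zero_of_le_dist (not_lt.1 fun hlt => h ?_)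
    exact ⟨c.coord u, hlt.le, c.param_coord u hN hu⟩
  · rfl

theorem bump_eq_one (c : SliceChart n M) {u : X} (hu : u ∈ c.nbhd)
    (h : c.coord u ∈ Metric.ball c.center (c.radius / 4)) : c.bump u = 1 := by
  unfold bump
  rw [if_pos hu]
  exact c.bumpModel.one_of_mem_closedBall (Metric.ball_subset_closedBall h)

theorem contDiffAlong_bump (c : SliceChart n M) : ContDiffAlong M c.bump := by
  intro u hu
  by_cases hN : u ∈ c.nbhd
  · refine ⟨fun w => c.bumpModel (c.coord w),
      c.bumpModel.contDiff.contDiffAt.comp u c.coord.contDiff.contDiffAt, ?_⟩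
    filter_upwards [mem_nhdsWithin_of_mem_nhds (c.isOpen_nbhd.mem_nhds hN)] with w hw
    rw [bump, if_pos hw]
  · refine ⟨fun _ => 0, contDiffAt_const, ?_⟩
    have hcomp : IsCompact (c.param '' Metric.closedBall c.center (c.radius / 2)) :=
      (isCompact_closedBall _ _).image_of_continuousOn
        (c.contDiffOn_param.continuousOn.mono c.closedBall_half_subset)
    have hu' : u ∈ (c.param '' Metric.closedBall c.center (c.radius / 2))ᶜ := by
      rintro ⟨x, hx, rfl⟩
      exact hN (c.param_mem_nbhd x (c.closedBall_half_subset hx))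
    filter_upwards [mem_nhdsWithin_of_mem_nhds (hcomp.isClosed.isOpen_compl.mem_nhds hu'),
      self_mem_nhdsWithin] with w hw hwM
    exact c.bump_eq_zero hwM hw

/-- Successive interpolation from the constant `y₁` to the constant `y₂`, one chart at a time. -/
noncomputable def interp (y₁ y₂ : Fin n → ℝ) : List (SliceChart n M) → X → Fin n → ℝ
  | [], _ => y₁
  | c :: l, u => interp y₁ y₂ l u + c.bump u • (y₂ - interp y₁ y₂ l u)

variable {y₁ y₂ : Fin n → ℝ}

theorem contDiffAlong_interp (l : List (SliceChart n M)) :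
    ContDiffAlong M (interp y₁ y₂ l) := by
  induction l with
  | nil => exact fun u _ => ⟨fun _ => y₁, contDiffAt_const, Eventually.of_forall fun _ => rfl⟩
  | cons c l ih =>
    intro u hu
    obtain ⟨g, hg, hev⟩ := ih u hu
    obtain ⟨b, hb, hevb⟩ := c.contDiffAlong_bump u hu
    refine ⟨fun w => g w + b w • (y₂ - g w), hg.add (hb.smul (contDiffAt_const.sub hg)), ?_⟩
    filter_upwards [hev, hevb] with w h1 h2
    rw [interp, h1, h2]

theorem norm_interp_le {ε : ℝ} (h₁ : ‖y₁‖ ≤ ε) (h₂ : ‖y₂‖ ≤ ε) (l : List (SliceChart n M)) (u : X) :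
    ‖interp y₁ y₂ l u‖ ≤ ε := by
  induction l with
  | nil => exact h₁
  | cons c l ih =>
    obtain ⟨hb0, hb1⟩ := c.bump_mem_Icc u
    have h := (convex_closedBall (0 : Fin n → ℝ) ε).add_smul_sub_mem
      (mem_closedBall_zero_iff.2 ih) (mem_closedBall_zero_iff.2 h₂) ⟨hb0, hb1⟩
    exact mem_closedBall_zero_iff.1 h

theorem interp_eq_of_mem {l : List (SliceChart n M)} {c : SliceChart n M} (hc : c ∈ l) {u : X}
    (hu : c.bump u = 1) : interp y₁ y₂ l u = y₂ := by
  induction l with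
  | nil => simp at hc
  | cons d l ih =>
    rcases List.mem_cons.1 hc with rfl | h
    · simp [interp, hu]
    · simp [interp, ih h]

theorem injOn_param (c : SliceChart n M) : InjOn c.param (Metric.ball c.center c.radius) := by
  intro x hx y hy hxy
  rw [← c.coord_param x hx, hxy, c.coord_param y hy]

/-- Solutions inside the half-radius piece of a chart correspond to zeros on the closed ball. -/
theorem inter_image_param_eq (c : SliceChart n M) (g : X → Fin n → ℝ) :
    {u ∈ M | g u = 0} ∩ c.param '' Metric.closedBall c.center (c.radius / 2) =
      c.param '' {x ∈ Metric.closedBall c.center (c.radius / 2) | g (c.param x) = 0} := by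
  ext u
  constructor
  · rintro ⟨⟨_, hu⟩, x, hx, rfl⟩
    exact ⟨x, ⟨hx, hu⟩, rfl⟩
  · rintro ⟨x, ⟨hx, hu⟩, rfl⟩
    exact ⟨⟨c.param_mem x (c.closedBall_half_subset hx), hu⟩, x, hx, rfl⟩

theorem finite_inter_image_param (c : SliceChart n M) {g : X → Fin n → ℝ}
    (hg : ContDiffAlong M g)
    (hreg : ∀ x ∈ Metric.ball c.center c.radius, g (c.param x) = 0 →
      (fderiv ℝ (fun x => g (c.param x)) x).det ≠ 0) :
    ({u ∈ M | g u = 0} ∩ c.param '' Metric.closedBall c.center (c.radius / 2)).Finite := by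
  rw [c.inter_image_param_eq]
  exact (finite_zeros_closedBall (by linarith [c.radius_pos]) (c.contDiffOn_comp_param hg)
    hreg).image _

/-- Changing a map only inside one chart does not change the parity of a regular zero count. -/
theorem ncard_zeros_eq_of_eq_off_chart (c : SliceChart n M) {g₀ g₁ : X → Fin n → ℝ}
    (hg₀ : ContDiffAlong M g₀) (hg₁ : ContDiffAlong M g₁)
    (hfin₀ : {u ∈ M | g₀ u = 0}.Finite) (hfin₁ : {u ∈ M | g₁ u = 0}.Finite)
    (heq : ∀ u ∈ M, u ∉ c.param '' Metric.closedBall c.center (c.radius / 2) → g₀ u = g₁ u)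
    (hreg₀ : ∀ x ∈ Metric.ball c.center c.radius, g₀ (c.param x) = 0 →
      (fderiv ℝ (fun x => g₀ (c.param x)) x).det ≠ 0)
    (hreg₁ : ∀ x ∈ Metric.ball c.center c.radius, g₁ (c.param x) = 0 →
      (fderiv ℝ (fun x => g₁ (c.param x)) x).det ≠ 0) :
    ({u ∈ M | g₀ u = 0}.ncard : ZMod 2) = {u ∈ M | g₁ u = 0}.ncard := by
  have hinj : InjOn c.param (Metric.closedBall c.center (c.radius / 2)) :=
    c.injOn_param.mono c.closedBall_half_subset
  have hball : ({x ∈ Metric.closedBall c.center (c.radius / 2) | g₀ (c.param x) = 0}.ncard :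
      ZMod 2) = {x ∈ Metric.closedBall c.center (c.radius / 2) | g₁ (c.param x) = 0}.ncard := by
    refine ncard_zeros_closedBall_eq (by linarith [c.radius_pos]) (by linarith [c.radius_pos])
      (c.contDiffOn_comp_param hg₀) (c.contDiffOn_comp_param hg₁) ?_ hreg₀ hreg₁
    intro x hx hx'
    refine heq _ (c.param_mem x hx) ?_
    rintro ⟨y, hy, hyx⟩
    exact hx' (c.injOn_param (c.closedBall_half_subset hy) hx hyx ▸ hy)
  have hdiff : {u ∈ M | g₀ u = 0} \ c.param '' Metric.closedBall c.center (c.radius / 2) =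
      {u ∈ M | g₁ u = 0} \ c.param '' Metric.closedBall c.center (c.radius / 2) := by
    ext u
    constructor
    · rintro ⟨⟨hM, hu⟩, hn⟩
      exact ⟨⟨hM, heq u hM hn ▸ hu⟩, hn⟩
    · rintro ⟨⟨hM, hu⟩, hn⟩
      exact ⟨⟨hM, (heq u hM hn).trans hu⟩, hn⟩
  rw [← ncard_inter_add_ncard_sdiff_eq_ncard {u ∈ M | g₀ u = 0}
      (c.param '' Metric.closedBall c.center (c.radius / 2)) hfin₀,
    ← ncard_inter_add_ncard_sdiff_eq_ncard {u ∈ M | g₁ u = 0}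
      (c.param '' Metric.closedBall c.center (c.radius / 2)) hfin₁, hdiff,
    c.inter_image_param_eq, c.inter_image_param_eq,
    (hinj.mono fun x hx => hx.1).ncard_image,
    (hinj.mono fun x hx => hx.1).ncard_image, Nat.cast_add, Nat.cast_add, hball]

end SliceChart

/-- On a set covered by slice charts, the parity of the number of solutions of `f u = y` is the same
for `y₁` and `y₂` after a common arbitrarily small perturbation, which can be chosen regular. -/
theorem exists_ncard_solutions_eq {X : Type*} [NormedAddCommGroup X] [NormedSpace ℝ X] {n : ℕ}
    {M : Set X} {f : X → Fin n → ℝ} (hf : ContDiff ℝ 1 f) {ε : ℝ}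
    (hK : IsCompact {u ∈ M | ‖f u‖ ≤ ε})
    (hchart : ∀ u ∈ M, ∃ c : SliceChart n M, u ∈ c.nbhd ∧
      c.coord u ∈ Metric.ball c.center (c.radius / 4))
    {y₁ y₂ : Fin n → ℝ} (hy₁ : ‖y₁‖ < ε) (hy₂ : ‖y₂‖ < ε) {δ : ℝ} (hδ : 0 < δ) :
    ∃ e : Fin n → ℝ, ‖e‖ < δ ∧
      (∀ u ∈ M, f u = y₁ + e → ∃ c : SliceChart n M, ∃ x ∈ Metric.ball c.center c.radius,
        c.param x = u ∧ (fderiv ℝ (fun x => f (c.param x)) x).det ≠ 0) ∧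
      ({u ∈ M | f u = y₁ + e}.ncard : ZMod 2) = {u ∈ M | f u = y₂ + e}.ncard := by
  classical
  choose c hcn hcb using hchart
  obtain ⟨t, htU⟩ := hK.elim_nhds_subcover'
    (fun u hu => (c u hu.1).nbhd ∩ (c u hu.1).coord ⁻¹' Metric.ball (c u hu.1).center
      ((c u hu.1).radius / 4))
    fun u hu => ((c u hu.1).isOpen_nbhd.inter
      (Metric.isOpen_ball.preimage (c u hu.1).coord.continuous)).mem_nhds
      ⟨hcn u hu.1, hcb u hu.1⟩
  let L : List (SliceChart n M) := t.toList.map fun u => c u.1 u.2.1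
  have hcover : ∀ u ∈ M, ‖f u‖ ≤ ε → ∃ d ∈ L, u ∈ d.nbhd ∧
      d.coord u ∈ Metric.ball d.center (d.radius / 4) := by
    intro u hu hfu
    obtain ⟨v, hv, huv⟩ := mem_iUnion₂.1 (htU ⟨hu, hfu⟩)
    exact ⟨c v.1 v.2.1, List.mem_map.2 ⟨v, Finset.mem_toList.2 hv, rfl⟩, huv⟩
  set η : ℝ := max ‖y₁‖ ‖y₂‖ with hη
  have hηε : η < ε := max_lt hy₁ hy₂
  let g : List (SliceChart n M) → X → Fin n → ℝ := fun l u => f u - SliceChart.interp y₁ y₂ l u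
  have hfA : ContDiffAlong M f := fun u _ => ⟨f, hf.contDiffAt, Eventually.of_forall fun _ => rfl⟩
  have hgA : ∀ l, ContDiffAlong M (g l) := by
    intro l u hu
    obtain ⟨k, hk, hev⟩ := SliceChart.contDiffAlong_interp (y₁ := y₁) (y₂ := y₂) l u hu
    refine ⟨fun w => f w - k w, hf.contDiffAt.sub hk, ?_⟩
    filter_upwards [hev] with w hw
    simp only [g, hw]
  have hs : {p : List (SliceChart n M) × SliceChart n M | p.1 <:+ L ∧ p.2 ∈ L}.Finite := by
    refine ((L.tails.finite_toSet).prod L.finite_toSet).subset fun p hp => ?_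
    exact ⟨(List.mem_tails _ _).2 hp.1, hp.2⟩
  obtain ⟨e, heδ, hreg⟩ := exists_norm_lt_forall_regular_value hs
    (h := fun p x => g p.1 (p.2.param x)) (B := fun p => Metric.ball p.2.center p.2.radius)
    (fun _ _ => Metric.isOpen_ball) (fun p _ => p.2.contDiffOn_comp_param (hgA p.1))
    (lt_min hδ (sub_pos.2 hηε))
  have heε : ‖e‖ < ε - η := heδ.trans_le (min_le_right _ _)
  let k : List (SliceChart n M) → X → Fin n → ℝ := fun l u => g l u - e
  have hkA : ∀ l, ContDiffAlong M (k l) := by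
    intro l u hu
    obtain ⟨q, hq, hev⟩ := hgA l u hu
    refine ⟨fun w => q w - e, hq.sub contDiffAt_const, ?_⟩
    filter_upwards [hev] with w hw
    simp only [k, hw]
  have hkreg : ∀ l, l <:+ L → ∀ d ∈ L, ∀ x ∈ Metric.ball d.center d.radius,
      k l (d.param x) = 0 → (fderiv ℝ (fun x => k l (d.param x)) x).det ≠ 0 := by
    intro l hl d hd x hx hk0
    have := hreg (l, d) ⟨hl, hd⟩ x hx (sub_eq_zero.1 hk0)
    simpa only [k, fderiv_sub_const] using this
  have hkK : ∀ l, ∀ u ∈ M, k l u = 0 → ‖f u‖ ≤ ε := by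
    intro l u hu hk0
    have h1 : f u = SliceChart.interp y₁ y₂ l u + e := by
      have := sub_eq_zero.1 hk0
      simp only [g] at this
      rw [← this]; abel
    have h2 := SliceChart.norm_interp_le (le_max_left ‖y₁‖ ‖y₂‖) (le_max_right ‖y₁‖ ‖y₂‖) l u
    rw [h1]
    linarith [norm_add_le (SliceChart.interp y₁ y₂ l u) e]
  have hkfin : ∀ l, l <:+ L → {u ∈ M | k l u = 0}.Finite := by
    intro l hl
    refine (L.finite_toSet.biUnion fun d hd =>
      d.finite_inter_image_param (hkA l) (hkreg l hl d hd)).subset ?_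
    intro u hu
    obtain ⟨d, hd, hun, hub⟩ := hcover u hu.1 (hkK l u hu.1 hu.2)
    refine mem_biUnion hd ⟨hu, d.coord u, ?_, d.param_coord u hun hu.1⟩
    exact Metric.ball_subset_closedBall (Metric.ball_subset_ball (by linarith [d.radius_pos]) hub)
  have hchain : ∀ l, l <:+ L →
      ({u ∈ M | k [] u = 0}.ncard : ZMod 2) = {u ∈ M | k l u = 0}.ncard := by
    intro l
    induction l with
    | nil => exact fun _ => rfl
    | cons d l ih =>
      intro hl
      have hl' : l <:+ L := (List.suffix_cons d l).trans hl
      have hd : d ∈ L := hl.subset List.mem_cons_self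
      refine (ih hl').trans (d.ncard_zeros_eq_of_eq_off_chart (hkA l) (hkA _) (hkfin l hl')
        (hkfin _ hl) ?_ (hkreg l hl' d hd) (hkreg _ hl d hd))
      intro u hu hun
      simp [k, g, SliceChart.interp, d.bump_eq_zero hu hun]
  have hnil : {u ∈ M | f u = y₁ + e} = {u ∈ M | k [] u = 0} := by
    ext u
    refine and_congr_right fun _ => ?_
    simp only [k, g, SliceChart.interp]
    rw [sub_sub, sub_eq_zero]
  have hfull : {u ∈ M | f u = y₂ + e} = {u ∈ M | k L u = 0} := by
    ext u
    refine and_congr_right fun hu => ?_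
    have hL : ‖f u‖ ≤ ε → (k L u = 0 ↔ f u = y₂ + e) := by
      intro hfu
      obtain ⟨d, hd, hun, hub⟩ := hcover u hu hfu
      simp only [k, g]
      rw [SliceChart.interp_eq_of_mem hd (d.bump_eq_one hun hub), sub_sub, sub_eq_zero]
    constructor
    · intro h
      refine (hL ?_).2 h
      rw [h]
      linarith [norm_add_le y₂ e, le_max_right ‖y₁‖ ‖y₂‖]
    · intro h
      exact (hL (hkK L u hu h)).1 h
  refine ⟨e, heδ.trans_le (min_le_left _ _), ?_, ?_⟩
  · intro u hu hfu
    have hk0 : k [] u = 0 := by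
      simp only [k, g, SliceChart.interp]
      rw [sub_sub, sub_eq_zero, hfu]
    obtain ⟨d, hd, hun, _⟩ := hcover u hu (hkK [] u hu hk0)
    have hx := d.coord_mem u hun hu
    have hpx := d.param_coord u hun hu
    refine ⟨d, d.coord u, hx, hpx, ?_⟩
    have := hkreg [] List.nil_suffix d hd (d.coord u) hx (by rw [hpx, hk0])
    simpa only [k, g, SliceChart.interp, fderiv_sub_const] using this
  · rw [hnil, hfull]
    exact hchain L List.suffix_rfl

/-- If `T` has index zero and its range is complemented by the range of `J`, then the preimage of
the range of `J` under `T` has the dimension of the domain of `J`. -/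
theorem finrank_comap_range_eq {K X Y E : Type*} [Field K] [AddCommGroup X] [Module K X]
    [AddCommGroup Y] [Module K Y] [AddCommGroup E] [Module K E] [FiniteDimensional K E]
    (T : X →ₗ[K] Y) (J : E →ₗ[K] Y) (P : Y →ₗ[K] E) (hPJ : ∀ e, P (J e) = e)
    [FiniteDimensional K (LinearMap.ker T)]
    (hind : Module.finrank K (LinearMap.ker T) = Module.finrank K (Y ⧸ LinearMap.range T))
    (htrans : LinearMap.range T ⊔ LinearMap.range J = ⊤) :
    FiniteDimensional K ((LinearMap.range J).comap T) ∧
      Module.finrank K ((LinearMap.range J).comap T) = Module.finrank K E := by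
  let B := (LinearMap.range J).comap T
  let φ : B →ₗ[K] E := (P ∘ₗ T).domRestrict B
  have hJP : ∀ x ∈ B, J (P (T x)) = T x := by
    rintro x ⟨e, he⟩
    rw [← he, hPJ]
  let ι : LinearMap.ker φ ≃ₗ[K] LinearMap.ker T :=
    { toFun := fun x => ⟨x.1.1, by
        have h : P (T x.1.1) = 0 := x.2
        rw [LinearMap.mem_ker, ← hJP _ x.1.2, h, map_zero]⟩
      invFun := fun x => ⟨⟨x.1, 0, by rw [map_zero, LinearMap.mem_ker.1 x.2]⟩, by
        change P (T x.1) = 0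
        rw [LinearMap.mem_ker.1 x.2, map_zero]⟩
      map_add' := fun _ _ => rfl
      map_smul' := fun _ _ => rfl
      left_inv := fun _ => rfl
      right_inv := fun _ => rfl }
  have : FiniteDimensional K (LinearMap.ker φ) := ι.symm.finiteDimensional
  have : FiniteDimensional K (B ⧸ LinearMap.ker φ) := φ.quotKerEquivRange.symm.finiteDimensional
  have hB : FiniteDimensional K B := Module.Finite.of_submodule_quotient (LinearMap.ker φ)
  refine ⟨hB, ?_⟩
  let q : E →ₗ[K] Y ⧸ LinearMap.range T := (LinearMap.range T).mkQ ∘ₗ J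
  have hq : LinearMap.range q = ⊤ := by
    rw [LinearMap.range_comp]
    have h : (LinearMap.range T ⊔ LinearMap.range J).map (LinearMap.range T).mkQ = ⊤ := by
      rw [htrans, Submodule.map_top, Submodule.range_mkQ]
    rwa [Submodule.map_sup, Submodule.mkQ_map_self, bot_sup_eq] at h
  have hqker : LinearMap.ker q = LinearMap.range φ := by
    ext e
    constructor
    · intro he
      obtain ⟨x, hx⟩ := (Submodule.Quotient.mk_eq_zero _).1 (LinearMap.mem_ker.1 he)
      exact ⟨⟨x, e, hx.symm⟩, by change P (T x) = e; rw [hx, hPJ]⟩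
    · rintro ⟨x, rfl⟩
      exact (Submodule.Quotient.mk_eq_zero _).2 ⟨x.1, (hJP _ x.2).symm⟩
  have h1 := φ.finrank_range_add_finrank_ker
  have h2 := q.finrank_range_add_finrank_ker
  rw [hq, finrank_top, hqker] at h2
  rw [ι.finrank_eq] at h1
  change Module.finrank K B = _
  omega

/-- Preimages of a finite dimensional subspace under a transversal Fredholm map of index zero have
slice charts. -/
theorem exists_sliceChart {X Y : Type*} [NormedAddCommGroup X] [NormedSpace ℝ X] [CompleteSpace X]
    [NormedAddCommGroup Y] [NormedSpace ℝ Y] [CompleteSpace Y] {n : ℕ} {G : X → Y}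
    (hG : ContDiff ℝ 1 G) (J : (Fin n → ℝ) →L[ℝ] Y) (P : Y →L[ℝ] (Fin n → ℝ))
    (hPJ : ∀ e, P (J e) = e) {O : Set X} (hO : IsOpen O) {u : X} (huO : u ∈ O)
    (huJ : G u ∈ range J) (hT : IsFredholmIndexZero (fderiv ℝ G u))
    (htrans : ∀ y, ∃ x e, fderiv ℝ G u x + J e = y) :
    ∃ c : SliceChart n {v | v ∈ O ∧ G v ∈ range J}, u ∈ c.nbhd ∧
      c.coord u ∈ Metric.ball c.center (c.radius / 4) := by
  set T := fderiv ℝ G u with hTdef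
  have hGu : HasFDerivAt G T u := (hG.differentiable one_ne_zero u).hasFDerivAt
  let W : Submodule ℝ Y := LinearMap.ker (P : Y →ₗ[ℝ] (Fin n → ℝ))
  have hWc : IsClosed (W : Set Y) := P.isClosed_ker
  have : CompleteSpace W := hWc.completeSpace_coe
  let Q : Y →L[ℝ] W := (ContinuousLinearMap.id ℝ Y - J.comp P).codRestrict W fun y => by
    change P (y - J (P y)) = 0
    rw [map_sub, hPJ, sub_self]
  have hQ : ∀ y, (Q y : Y) = y - J (P y) := fun _ => rfl
  have hQ0 : ∀ y, Q y = 0 ↔ y ∈ range J := by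
    intro y
    rw [← Submodule.coe_eq_zero, hQ, sub_eq_zero]
    constructor
    · exact fun h => ⟨P y, h.symm⟩
    · rintro ⟨e, rfl⟩
      rw [hPJ]
  have hTA : ∀ x, Q (T x) = 0 ↔ x ∈ (LinearMap.range (J : (Fin n → ℝ) →ₗ[ℝ] Y)).comap
      (T : X →ₗ[ℝ] Y) := fun x => hQ0 (T x)
  have := hT.1
  obtain ⟨hBfin, hBn⟩ := finrank_comap_range_eq (T : X →ₗ[ℝ] Y) (J : (Fin n → ℝ) →ₗ[ℝ] Y)
    (P : Y →ₗ[ℝ] (Fin n → ℝ)) hPJ hT.2.2.2 (by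
      rw [eq_top_iff]
      intro y _
      obtain ⟨x, e, rfl⟩ := htrans y
      exact Submodule.add_mem_sup ⟨x, rfl⟩ ⟨e, rfl⟩)
  set B := (LinearMap.range (J : (Fin n → ℝ) →ₗ[ℝ] Y)).comap (T : X →ₗ[ℝ] Y) with hB
  obtain ⟨p, hp⟩ := Submodule.ClosedComplemented.of_finiteDimensional (𝕜 := ℝ) B
  let φ : B ≃L[ℝ] (Fin n → ℝ) := ContinuousLinearEquiv.ofFinrankEq hBn
  let ℓ : X →L[ℝ] (Fin n → ℝ) := (φ : B →L[ℝ] (Fin n → ℝ)).comp p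
  have hℓ : ∀ b : B, ℓ b = φ b := fun b => by simp [ℓ, hp]
  let D : X →L[ℝ] (Fin n → ℝ) × W := ℓ.prod (Q.comp T)
  have hDker : LinearMap.ker (D : X →ₗ[ℝ] (Fin n → ℝ) × W) = ⊥ := by
    rw [LinearMap.ker_eq_bot']
    intro x hx
    obtain ⟨h1, h2⟩ := Prod.mk.inj (show (ℓ x, Q (T x)) = (0, 0) from hx)
    have h3 := hℓ ⟨x, (hTA x).1 h2⟩
    rw [h1, eq_comm, map_eq_zero_iff _ φ.injective] at h3
    exact congrArg Subtype.val h3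
  have hDrange : LinearMap.range (D : X →ₗ[ℝ] (Fin n → ℝ) × W) = ⊤ := by
    rw [LinearMap.range_eq_top]
    rintro ⟨a, w⟩
    obtain ⟨x, e, hxe⟩ := htrans w
    let b : B := φ.symm (a - ℓ x)
    refine ⟨x + b, Prod.ext ?_ ?_⟩
    · change ℓ (x + b) = a
      rw [map_add, hℓ, φ.apply_symm_apply, add_sub_cancel]
    · change Q (T (x + b)) = w
      rw [map_add, map_add, (hTA b).2 b.2, add_zero]
      have h1 : Q w = w := by
        apply Subtype.ext
        rw [hQ, show P (w : Y) = 0 from w.2, map_zero, sub_zero]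
      rw [← h1, ← hxe, map_add, (hQ0 (J e)).2 ⟨e, rfl⟩, add_zero]
  let D' : X ≃L[ℝ] (Fin n → ℝ) × W := ContinuousLinearEquiv.ofBijective D hDker hDrange
  let Ψ : X → (Fin n → ℝ) × W := fun v => (ℓ v, Q (G v))
  have hΨ : ContDiff ℝ 1 Ψ := ℓ.contDiff.prodMk (Q.contDiff.comp hG)
  have hΨu : HasFDerivAt Ψ (D' : X →L[ℝ] (Fin n → ℝ) × W) u := by
    have : (D' : X →L[ℝ] (Fin n → ℝ) × W) = D := by ext1 x; rfl
    rw [this]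
    exact ℓ.hasFDerivAt.prodMk (Q.hasFDerivAt.comp u hGu)
  let ψ := hΨ.contDiffAt.toOpenPartialHomeomorph Ψ hΨu one_ne_zero
  have huψ : u ∈ ψ.source := hΨ.contDiffAt.mem_toOpenPartialHomeomorph_source hΨu one_ne_zero
  have hΨapp : ∀ v, ψ v = Ψ v := fun _ => rfl
  have hΨ0 : Ψ u = (ℓ u, 0) := Prod.ext rfl ((hQ0 _).2 huJ)
  have hsymm : ContDiffAt ℝ 1 ψ.symm (Ψ u) := hΨ.contDiffAt.to_localInverse hΨu one_ne_zero
  have hev : ∀ᶠ z in 𝓝 (Ψ u), z ∈ ψ.target ∧ ContDiffAt ℝ 1 ψ.symm z ∧ ψ.symm z ∈ O := by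
    have huO' : ψ.symm (Ψ u) ∈ O := by rwa [← hΨapp, ψ.left_inv huψ]
    filter_upwards [ψ.open_target.mem_nhds (ψ.map_source huψ), hsymm.eventually (by simp),
      hsymm.continuousAt.preimage_mem_nhds (hO.mem_nhds huO')] with z h1 h2 h3 using ⟨h1, h2, h3⟩
  rw [hΨ0] at hev
  have hcont : Continuous fun x : Fin n → ℝ => ((x, 0) : (Fin n → ℝ) × W) := by fun_prop
  obtain ⟨r, hr, hball⟩ := Metric.eventually_nhds_iff_ball.1 (hcont.tendsto (ℓ u) |>.eventually hev)
  have hright : ∀ x ∈ Metric.ball (ℓ u) r, Ψ (ψ.symm (x, 0)) = (x, 0) := fun x hx =>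
    ψ.right_inv (hball x hx).1
  have hcoord : ∀ x ∈ Metric.ball (ℓ u) r, ℓ (ψ.symm (x, 0)) = x := fun x hx =>
    congrArg Prod.fst (hright x hx)
  refine ⟨{
    center := ℓ u
    radius := r
    radius_pos := hr
    param := fun x => ψ.symm (x, 0)
    coord := ℓ
    nbhd := ψ.source ∩ ℓ ⁻¹' Metric.ball (ℓ u) r
    isOpen_nbhd := ψ.open_source.inter (Metric.isOpen_ball.preimage ℓ.continuous)
    contDiffOn_param := fun x hx => ((hball x hx).2.1.comp x
      (contDiffAt_id.prodMk contDiffAt_const)).contDiffWithinAt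
    param_mem := fun x hx => ⟨(hball x hx).2.2, (hQ0 _).1 (congrArg Prod.snd (hright x hx))⟩
    coord_param := hcoord
    param_mem_nbhd := fun x hx => ⟨ψ.map_target (hball x hx).1, by
      rw [mem_preimage, hcoord x hx]; exact hx⟩
    coord_mem := fun v hv _ => hv.2
    param_coord := fun v hv hvM => by
      have : ((ℓ v, 0) : (Fin n → ℝ) × W) = ψ v := Prod.ext rfl ((hQ0 _).2 hvM.2).symm
      rw [this, ψ.left_inv hv.1] }, ⟨huψ, ?_⟩, ?_⟩
  · exact Metric.mem_ball_self hr
  · exact Metric.mem_ball_self (by linarith)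

/-- A regular point of the finite dimensional reduction is a regular point of the full map. -/
theorem bijective_fderiv_of_det_ne_zero {X Y : Type*} [NormedAddCommGroup X] [NormedSpace ℝ X]
    [NormedAddCommGroup Y] [NormedSpace ℝ Y] {n : ℕ} {G : X → Y}
    (hG : ContDiff ℝ 1 G) {J : (Fin n → ℝ) →L[ℝ] Y} {P : Y →L[ℝ] (Fin n → ℝ)}
    (hPJ : ∀ e, P (J e) = e) {O : Set X} (c : SliceChart n {v | v ∈ O ∧ G v ∈ range J})
    {x : Fin n → ℝ} (hx : x ∈ Metric.ball c.center c.radius)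
    (hT : IsFredholmIndexZero (fderiv ℝ G (c.param x)))
    (htrans : ∀ y, ∃ v e, fderiv ℝ G (c.param x) v + J e = y)
    (hdet : (fderiv ℝ (fun x => P (G (c.param x))) x).det ≠ 0) :
    Function.Bijective (fderiv ℝ G (c.param x)) := by
  set T := fderiv ℝ G (c.param x) with hTdef
  have hball := Metric.isOpen_ball.mem_nhds hx
  have hp := ((c.contDiffOn_param.contDiffAt hball).differentiableAt one_ne_zero).hasFDerivAt
  set R := fderiv ℝ c.param x
  have hGp : HasFDerivAt (fun z => G (c.param z)) (T.comp R) x :=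
    (hG.differentiable one_ne_zero _).hasFDerivAt.comp x hp
  have hPGp : HasFDerivAt (fun z => P (G (c.param z))) (P.comp (T.comp R)) x :=
    P.hasFDerivAt.comp x hGp
  have hJPGp : HasFDerivAt (fun z => G (c.param z)) (J.comp (P.comp (T.comp R))) x := by
    refine (J.hasFDerivAt.comp x hPGp).congr_of_eventuallyEq ?_
    filter_upwards [hball] with z hz
    obtain ⟨e, he⟩ := (c.param_mem z hz).2
    simp only [Function.comp, ← he, hPJ]
  have hTR : ∀ z, T (R z) = J (P (T (R z))) := fun z =>
    congrArg (fun A : (Fin n → ℝ) →L[ℝ] Y => A z) (hGp.unique hJPGp)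
  rw [hPGp.fderiv] at hdet
  have hsurjE : Function.Surjective (P.comp (T.comp R)) := by
    have hu : IsUnit (LinearMap.det ((P.comp (T.comp R) : (Fin n → ℝ) →L[ℝ] (Fin n → ℝ)) :
      (Fin n → ℝ) →ₗ[ℝ] (Fin n → ℝ))) := isUnit_iff_ne_zero.2 hdet
    exact ((Module.End.isUnit_iff _).1 ((LinearMap.isUnit_iff_isUnit_det _).2 hu)).surjective
  have hsurj : Function.Surjective T := by
    intro y
    obtain ⟨v, e, rfl⟩ := htrans y
    obtain ⟨z, hz⟩ := hsurjE e
    refine ⟨v + R z, ?_⟩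
    rw [map_add, hTR, ← hz]
    rfl
  refine ⟨?_, hsurj⟩
  have hrange : LinearMap.range (T : X →ₗ[ℝ] Y) = ⊤ := LinearMap.range_eq_top.2 hsurj
  have := hT.1
  have h0 : Module.finrank ℝ (LinearMap.ker (T : X →ₗ[ℝ] Y)) = 0 := by
    rw [hT.2.2.2, hrange]
    exact Module.finrank_zero_of_subsingleton
  exact LinearMap.ker_eq_bot.1 (Submodule.finrank_eq_zero.1 h0)

/-- Stability of the cardinality of a finite set of solutions: locally unique, persistent solutions
that capture all nearby solutions. -/
theorem Set.Finite.eventually_ncard_eq {A X : Type*} [TopologicalSpace X] [T2Space X]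
    {l : Filter A} {Z : Set X} (hZ : Z.Finite) {Sol : A → Set X}
    (hex : ∀ u ∈ Z, ∀ U ∈ 𝓝 u, ∀ᶠ b in l, ∃ v ∈ U, v ∈ Sol b)
    (huniq : ∀ u ∈ Z, ∃ U ∈ 𝓝 u, ∀ᶠ b in l, ∀ v ∈ U, ∀ w ∈ U, v ∈ Sol b → w ∈ Sol b → v = w)
    (hall : ∀ V, IsOpen V → Z ⊆ V → ∀ᶠ b in l, Sol b ⊆ V) :
    ∀ᶠ b in l, (Sol b).ncard = Z.ncard := by
  obtain ⟨U, hU, hdisj⟩ := hZ.t2_separation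
  choose! U' hU' hinj using huniq
  let V : X → Set X := fun u => U u ∩ interior (U' u)
  have hVo : ∀ u, IsOpen (V u) := fun u => (hU u).2.inter isOpen_interior
  have hVn : ∀ u ∈ Z, u ∈ V u := fun u hu =>
    ⟨(hU u).1, mem_interior_iff_mem_nhds.2 (hU' u hu)⟩
  have h1 : ∀ᶠ b in l, ∀ u ∈ Z, ∃ v ∈ V u, v ∈ Sol b :=
    (eventually_all_finite hZ).2 fun u hu => hex u hu _ ((hVo u).mem_nhds (hVn u hu))
  have h2 := hall (⋃ u ∈ Z, V u) (isOpen_biUnion fun u _ => hVo u)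
    fun u hu => mem_biUnion hu (hVn u hu)
  filter_upwards [h1, h2, (eventually_all_finite hZ).2 hinj] with b hb1 hb2 hb3
  choose! v hvV hvS using hb1
  have hvinj : InjOn v Z := by
    intro u hu w hw huw
    by_contra hne
    exact (hdisj hu hw hne).le_bot ⟨(hvV u hu).1, huw ▸ (hvV w hw).1⟩
  have himg : Sol b = v '' Z := by
    apply Subset.antisymm
    · intro x hx
      obtain ⟨u, hu, hxu⟩ := mem_iUnion₂.1 (hb2 hx)
      exact ⟨u, hu, hb3 u hu _ (interior_subset (hvV u hu).2) _ (interior_subset hxu.2)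
        (hvS u hu) hx⟩
    · rintro _ ⟨u, hu, rfl⟩
      exact hvS u hu
  rw [himg, hvinj.ncard_image]

/-- The suspension `(l, u) ↦ (l, F (l, u))` is a local homeomorphism where the partial derivative is
bijective. -/
theorem exists_openPartialHomeomorph_suspension {X Y : Type*} [NormedAddCommGroup X]
    [NormedSpace ℝ X] [CompleteSpace X] [NormedAddCommGroup Y] [NormedSpace ℝ Y] [CompleteSpace Y]
    {F : ℝ × X → Y} (hF : ContDiff ℝ 1 F) {l : ℝ} {u : X}
    (hbij : Function.Bijective (fderiv ℝ (fun v => F (l, v)) u)) :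
    ∃ ψ : OpenPartialHomeomorph (ℝ × X) (ℝ × Y), (l, u) ∈ ψ.source ∧
      ∀ p, ψ p = (p.1, F p) := by
  have hFd : HasFDerivAt F (fderiv ℝ F (l, u)) (l, u) :=
    (hF.differentiable one_ne_zero _).hasFDerivAt
  set A := fderiv ℝ F (l, u)
  have hpart : fderiv ℝ (fun v => F (l, v)) u = A.comp (ContinuousLinearMap.inr ℝ ℝ X) :=
    (hFd.comp u (hasFDerivAt_prodMk_right l u)).fderiv
  rw [hpart] at hbij
  let D : ℝ × X →L[ℝ] ℝ × Y := (ContinuousLinearMap.fst ℝ ℝ X).prod A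
  have hker : LinearMap.ker (D : ℝ × X →ₗ[ℝ] ℝ × Y) = ⊥ := by
    rw [LinearMap.ker_eq_bot']
    rintro ⟨s, x⟩ hx
    obtain ⟨h1, h2⟩ := Prod.mk.inj (show (s, A (s, x)) = (0, 0) from hx)
    subst h1
    exact Prod.ext rfl (hbij.1 (h2.trans (map_zero _).symm))
  have hrange : LinearMap.range (D : ℝ × X →ₗ[ℝ] ℝ × Y) = ⊤ := by
    rw [LinearMap.range_eq_top]
    rintro ⟨s, y⟩
    obtain ⟨x, hx⟩ := hbij.2 (y - A (s, 0))
    refine ⟨(s, x), Prod.ext rfl ?_⟩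
    change A (s, x) = y
    have h1 : A (0, x) = y - A (s, 0) := hx
    have h2 : ((s, x) : ℝ × X) = (s, 0) + (0, x) := by simp
    rw [h2, map_add, h1, add_sub_cancel]
  let D' : (ℝ × X) ≃L[ℝ] ℝ × Y := ContinuousLinearEquiv.ofBijective D hker hrange
  have hΨ : ContDiff ℝ 1 fun p : ℝ × X => (p.1, F p) := contDiff_fst.prodMk hF
  have hΨd : HasFDerivAt (fun p : ℝ × X => (p.1, F p)) (D' : ℝ × X →L[ℝ] ℝ × Y) (l, u) := by
    have : (D' : ℝ × X →L[ℝ] ℝ × Y) = D :=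
      ContinuousLinearMap.ext fun _ => rfl
    rw [this]
    exact hasFDerivAt_fst.prodMk hFd
  exact ⟨hΨ.contDiffAt.toOpenPartialHomeomorph _ hΨd one_ne_zero,
    hΨ.contDiffAt.mem_toOpenPartialHomeomorph_source hΨd one_ne_zero, fun _ => rfl⟩

/-- Near a regular pair `(l, y)` the number of solutions of `F (l, u) = J y` is finite and locally
constant. -/
theorem eventually_ncard_solutions_eq {X Y E : Type*} [NormedAddCommGroup X]
    [NormedSpace ℝ X] [CompleteSpace X] [NormedAddCommGroup Y] [NormedSpace ℝ Y] [CompleteSpace Y]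
    [NormedAddCommGroup E] [NormedSpace ℝ E]
    {F : ℝ × X → Y} (hF : ContDiff ℝ 1 F) {J : E →L[ℝ] Y} {P : Y →L[ℝ] E}
    (hPJ : ∀ e, P (J e) = e) {O : Set (ℝ × X)} (hO : IsOpen O) {Λ : Set ℝ} {ε : ℝ}
    (hcpt : IsCompact {p ∈ O | p.1 ∈ Λ ∧ F p ∈ range J ∧ ‖P (F p)‖ ≤ ε})
    {l : ℝ} (hl : l ∈ Λ) {y : E} (hy : ‖y‖ < ε)
    (hreg : ∀ u, (l, u) ∈ O → F (l, u) = J y →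
      Function.Bijective (fderiv ℝ (fun v => F (l, v)) u)) :
    ∀ᶠ b in 𝓝[Λ ×ˢ univ] ((l, y) : ℝ × E),
      {u | (b.1, u) ∈ O ∧ F (b.1, u) = J b.2}.ncard =
        {u | (l, u) ∈ O ∧ F (l, u) = J y}.ncard := by
  set Z : Set X := {u | (l, u) ∈ O ∧ F (l, u) = J y} with hZdef
  set K := {p ∈ O | p.1 ∈ Λ ∧ F p ∈ range J ∧ ‖P (F p)‖ ≤ ε} with hK
  let Sol : ℝ × E → Set X := fun b => {u | (b.1, u) ∈ O ∧ F (b.1, u) = J b.2}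
  have hSolK : ∀ b : ℝ × E, b.1 ∈ Λ → ‖b.2‖ ≤ ε → ∀ u ∈ Sol b, (b.1, u) ∈ K := by
    intro b hb hbε u hu
    refine ⟨hu.1, hb, ⟨b.2, hu.2.symm⟩, ?_⟩
    rwa [hu.2, hPJ]
  have hΦ : Continuous fun p : ℝ × X => (p.1, P (F p)) :=
    continuous_fst.prodMk (P.continuous.comp hF.continuous)
  have hKZ : ∀ p ∈ K, (p.1, P (F p)) = (l, y) → p.2 ∈ Z := by
    rintro ⟨s, u⟩ ⟨hpO, _, ⟨e, he⟩, _⟩ hp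
    obtain ⟨h1, h2⟩ := Prod.mk.inj hp
    subst h1
    rw [← he, hPJ] at h2
    subst h2
    exact ⟨hpO, he.symm⟩
  have huniq : ∀ u ∈ Z, ∃ U ∈ 𝓝 u, ∀ᶠ b in 𝓝[Λ ×ˢ univ] ((l, y) : ℝ × E),
      ∀ v ∈ U, ∀ w ∈ U, v ∈ Sol b → w ∈ Sol b → v = w := by
    intro u hu
    obtain ⟨ψ, hψ, hψF⟩ := exists_openPartialHomeomorph_suspension hF (hreg u hu.1 hu.2)
    obtain ⟨A, hA, U, hU, hAU⟩ := mem_nhds_prod_iff.1 (ψ.open_source.mem_nhds hψ)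
    refine ⟨U, hU, ?_⟩
    filter_upwards [mem_nhdsWithin_of_mem_nhds (continuous_fst.continuousAt.preimage_mem_nhds hA)]
      with b hb v hv w hw hvb hwb
    have h : ψ (b.1, v) = ψ (b.1, w) := by rw [hψF, hψF, hvb.2, hwb.2]
    exact congrArg Prod.snd (ψ.injOn (hAU (mk_mem_prod hb hv)) (hAU (mk_mem_prod hb hw)) h)
  have hZc : IsCompact Z := by
    have h1 : IsCompact (K ∩ (fun p : ℝ × X => (p.1, P (F p))) ⁻¹' {(l, y)}) :=
      hcpt.inter_right (isClosed_singleton.preimage hΦ)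
    have h2 : Z = Prod.snd '' (K ∩ (fun p : ℝ × X => (p.1, P (F p))) ⁻¹' {(l, y)}) := by
      apply Subset.antisymm
      · intro u hu
        refine ⟨(l, u), ⟨hSolK (l, y) hl hy.le u hu, ?_⟩, rfl⟩
        change (l, P (F (l, u))) = (l, y)
        rw [hu.2, hPJ]
      · rintro _ ⟨p, ⟨hp, hp'⟩, rfl⟩
        exact hKZ p hp hp'
    rw [h2]
    exact h1.image continuous_snd
  have hZfin : Z.Finite := by
    refine hZc.finite_of_isolated fun u hu => ?_
    obtain ⟨U, hU, h⟩ := huniq u hu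
    exact ⟨U, hU, fun w hw hwZ =>
      h.self_of_nhdsWithin ⟨hl, mem_univ y⟩ w hw u (mem_of_mem_nhds hU) hwZ hu⟩
  refine hZfin.eventually_ncard_eq (Sol := Sol) ?_ huniq ?_
  · intro u hu U hU
    obtain ⟨ψ, hψ, hψF⟩ := exists_openPartialHomeomorph_suspension hF (hreg u hu.1 hu.2)
    have hN : O ∩ Prod.snd ⁻¹' U ∈ 𝓝 (l, u) :=
      inter_mem (hO.mem_nhds hu.1) (continuous_snd.continuousAt.preimage_mem_nhds hU)
    have himg := ψ.image_mem_nhds hψ hN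
    have hcont : ContinuousAt (fun b : ℝ × E => (b.1, J b.2)) (l, y) := by fun_prop
    have hval : (l, J y) = ψ (l, u) := by rw [hψF, hu.2]
    rw [← hval] at himg
    filter_upwards [mem_nhdsWithin_of_mem_nhds (hcont.preimage_mem_nhds himg)] with b hb
    obtain ⟨⟨s, v⟩, ⟨hvO, hvU⟩, hv⟩ := hb
    obtain ⟨h1, h2⟩ := Prod.mk.inj ((hψF _).symm.trans hv)
    subst h1
    exact ⟨v, hvU, hvO, h2⟩
  · intro V hV hZV
    have h1 : IsCompact (K ∩ (Prod.snd ⁻¹' V)ᶜ) :=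
      hcpt.inter_right (hV.preimage continuous_snd).isClosed_compl
    have h2 := (h1.image hΦ).isClosed.isOpen_compl
    have h3 : (l, y) ∈ ((fun p : ℝ × X => (p.1, P (F p))) '' (K ∩ (Prod.snd ⁻¹' V)ᶜ))ᶜ := by
      rintro ⟨p, ⟨hpK, hpV⟩, hp⟩
      exact hpV (hZV (hKZ p hpK hp))
    have h4 : ∀ᶠ b : ℝ × E in 𝓝 (l, y), ‖b.2‖ < ε :=
      (continuous_snd.norm.tendsto (l, y)).eventually (gt_mem_nhds hy)
    filter_upwards [self_mem_nhdsWithin, mem_nhdsWithin_of_mem_nhds (h2.mem_nhds h3),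
      mem_nhdsWithin_of_mem_nhds h4] with b hb1 hb2 hb3 u hu
    by_contra huV
    refine hb2 ⟨(b.1, u), ⟨hSolK b hb1.1 hb3.le u hu, huV⟩, ?_⟩
    change (b.1, P (F (b.1, u))) = b
    rw [hu.2, hPJ]

/-- Parity invariance along the parameter: a nondegenerate unique zero at `l₀` cannot be isolated,
within the half-space `l₀ ≤ l`, from the boundary of a bounded open set. -/
theorem false_of_isCompact_of_unique_zero {X Y : Type*} [NormedAddCommGroup X]
    [NormedSpace ℝ X] [CompleteSpace X] [NormedAddCommGroup Y] [NormedSpace ℝ Y] [CompleteSpace Y]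
    {F : ℝ × X → Y} (hF : ContDiff ℝ 1 F) {l₀ : ℝ} {u₀ : X}
    (hFred : ∀ l : ℝ, ∀ u : X, IsFredholmIndexZero (fderiv ℝ (fun v => F (l, v)) u))
    (hUnique : ∀ u : X, F (l₀, u) = 0 ↔ u = u₀)
    (hBij : Function.Bijective (fderiv ℝ (fun v => F (l₀, v)) u₀))
    {n : ℕ} {J : (Fin n → ℝ) →L[ℝ] Y} {P : Y →L[ℝ] (Fin n → ℝ)} (hPJ : ∀ e, P (J e) = e)
    {O : Set (ℝ × X)} (hO : IsOpen O) (hOb : IsBounded O) (hp₀ : (l₀, u₀) ∈ O)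
    (htrans : ∀ l u, (l, u) ∈ O → ∀ y, ∃ x e, fderiv ℝ (fun v => F (l, v)) u x + J e = y)
    {ε : ℝ} (hε : 0 < ε)
    (hcpt : IsCompact {p ∈ O | p.1 ∈ Ici l₀ ∧ F p ∈ range J ∧ ‖P (F p)‖ ≤ ε}) : False := by
  let N : ℝ → (Fin n → ℝ) → ℕ := fun l y => {u | (l, u) ∈ O ∧ F (l, u) = J y}.ncard
  let M : ℝ → Set X := fun l => {u | u ∈ {v | (l, v) ∈ O} ∧ F (l, u) ∈ range J}
  have hMsol : ∀ l y, {u ∈ M l | P (F (l, u)) = y} = {u | (l, u) ∈ O ∧ F (l, u) = J y} := by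
    intro l y
    ext u
    constructor
    · rintro ⟨⟨h1, e, he⟩, h2⟩
      rw [← he, hPJ] at h2
      exact ⟨h1, h2 ▸ he.symm⟩
    · rintro ⟨h1, h2⟩
      exact ⟨⟨h1, y, h2.symm⟩, by rw [h2, hPJ]⟩
  have hslice : ∀ l, ContDiff ℝ 1 fun v => F (l, v) := fun l =>
    hF.comp (contDiff_const.prodMk contDiff_id)
  have hOl : ∀ l, IsOpen {v : X | (l, v) ∈ O} := fun l => hO.preimage (by fun_prop)
  have hpert : ∀ l ∈ Ici l₀, ∀ y₁ y₂ : Fin n → ℝ, ‖y₁‖ < ε → ‖y₂‖ < ε → ∀ δ > 0,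
      ∃ e : Fin n → ℝ, ‖e‖ < δ ∧
        (∀ u, (l, u) ∈ O → F (l, u) = J (y₁ + e) →
          Function.Bijective (fderiv ℝ (fun v => F (l, v)) u)) ∧
        (N l (y₁ + e) : ZMod 2) = N l (y₂ + e) := by
    intro l hl y₁ y₂ hy₁ hy₂ δ hδ
    have hK : IsCompact {u ∈ M l | ‖P (F (l, u))‖ ≤ ε} := by
      have hfib := hcpt.inter_right ((isClosed_singleton (x := l)).preimage
        (continuous_fst : Continuous (Prod.fst : ℝ × X → ℝ)))
      convert hfib.image continuous_snd using 1
      ext u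
      constructor
      · rintro ⟨⟨h1, h2⟩, h3⟩
        exact ⟨(l, u), ⟨⟨h1, hl, h2, h3⟩, rfl⟩, rfl⟩
      · rintro ⟨⟨s, v⟩, ⟨⟨h1, _, h2, h3⟩, h4⟩, rfl⟩
        obtain rfl : s = l := h4
        exact ⟨⟨h1, h2⟩, h3⟩
    obtain ⟨e, he, hreg, hpar⟩ := exists_ncard_solutions_eq (M := M l)
      (f := fun u => P (F (l, u))) (P.contDiff.comp (hslice l)) hK
      (fun u hu => exists_sliceChart (hslice l) J P hPJ (hOl l) hu.1 hu.2 (hFred l u)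
        (htrans l u hu.1)) hy₁ hy₂ hδ
    refine ⟨e, he, ?_, ?_⟩
    · intro u huO hu
      obtain ⟨c, x, hx, rfl, hdet⟩ := hreg u ⟨huO, y₁ + e, hu.symm⟩ (by rw [hu, hPJ])
      exact bijective_fderiv_of_det_ne_zero (hslice l) hPJ c hx (hFred l _) (htrans l _ huO) hdet
    · rwa [hMsol, hMsol] at hpar
  let Par : ℝ → ZMod 2 → Prop := fun l k => ∃ W : Set (Fin n → ℝ), IsOpen W ∧ W.Nonempty ∧
    (∀ y ∈ W, ‖y‖ < ε) ∧ ∀ y ∈ W, (N l y : ZMod 2) = k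
  have hParUnique : ∀ l ∈ Ici l₀, ∀ k₁ k₂, Par l k₁ → Par l k₂ → k₁ = k₂ := by
    rintro l hl k₁ k₂ ⟨W₁, hW₁, ⟨y₁, hy₁⟩, hε₁, hk₁⟩ ⟨W₂, hW₂, ⟨y₂, hy₂⟩, hε₂, hk₂⟩
    obtain ⟨δ₁, hδ₁, hb₁⟩ := Metric.isOpen_iff.1 hW₁ y₁ hy₁
    obtain ⟨δ₂, hδ₂, hb₂⟩ := Metric.isOpen_iff.1 hW₂ y₂ hy₂
    obtain ⟨e, he, -, hpar⟩ := hpert l hl y₁ y₂ (hε₁ y₁ hy₁) (hε₂ y₂ hy₂) (min δ₁ δ₂)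
      (lt_min hδ₁ hδ₂)
    rw [← hk₁ (y₁ + e) (hb₁ (by simpa using he.trans_le (min_le_left _ _))),
      ← hk₂ (y₂ + e) (hb₂ (by simpa using he.trans_le (min_le_right _ _))), hpar]
  have hstab : ∀ l ∈ Ici l₀, ∀ y : Fin n → ℝ, ‖y‖ < ε → (∀ u, (l, u) ∈ O → F (l, u) = J y →
      Function.Bijective (fderiv ℝ (fun v => F (l, v)) u)) →
      ∀ᶠ l' in 𝓝[Ici l₀] l, Par l' (N l y) := by
    intro l hl y hy hreg
    have hev := eventually_ncard_solutions_eq hF hPJ hO hcpt hl hy hreg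
    rw [nhdsWithin_prod_eq, nhdsWithin_univ, eventually_prod_iff] at hev
    obtain ⟨pa, hpa, pb, hpb, hab⟩ := hev
    obtain ⟨W, hWpb, hWo, hyW⟩ := eventually_nhds_iff.1 (hpb.and
      ((continuous_norm.tendsto y).eventually (gt_mem_nhds hy)))
    filter_upwards [hpa] with l' hl'
    exact ⟨W, hWo, ⟨y, hyW⟩, fun z hz => (hWpb z hz).2, fun z hz =>
      congrArg Nat.cast (hab hl' (hWpb z hz).1)⟩
  have hloc : ∀ l ∈ Ici l₀, ∃ k, ∀ᶠ l' in 𝓝[Ici l₀] l, Par l' k := by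
    intro l hl
    obtain ⟨e, he, hreg, -⟩ := hpert l hl 0 0 (by simpa) (by simpa) ε hε
    rw [zero_add] at hreg
    exact ⟨_, hstab l hl e he hreg⟩
  choose! k hk using hloc
  have hkPar : ∀ l ∈ Ici l₀, Par l (k l) := fun l hl => (hk l hl).self_of_nhdsWithin hl
  have hstart : Par l₀ 1 := by
    have h := (hstab l₀ self_mem_Ici 0 (by simpa) ?_).self_of_nhdsWithin self_mem_Ici
    · have hN : N l₀ 0 = 1 := by
        have : {u | (l₀, u) ∈ O ∧ F (l₀, u) = J 0} = {u₀} := by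
          ext u
          rw [map_zero]
          constructor
          · exact fun h => (hUnique u).1 h.2
          · rintro rfl
            exact ⟨hp₀, (hUnique u).2 rfl⟩
        simp only [N, this, ncard_singleton]
      rwa [hN, Nat.cast_one] at h
    · intro u _ hu
      rw [map_zero, hUnique] at hu
      rwa [hu]
  obtain ⟨b, hb⟩ : ∃ b, ∀ p ∈ O, p.1 < b := by
    obtain ⟨R, hR⟩ := hOb.exists_norm_le
    refine ⟨R + 1, fun p hp => ?_⟩
    have h : p.1 ≤ ‖p‖ := (le_abs_self p.1).trans (norm_fst_le p)
    linarith [hR p hp]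
  have hend : Par b 0 := by
    refine ⟨Metric.ball 0 ε, Metric.isOpen_ball, ⟨0, Metric.mem_ball_self hε⟩,
      fun y hy => by simpa using hy, fun y _ => ?_⟩
    have : {u | (b, u) ∈ O ∧ F (b, u) = J y} = ∅ := by
      ext u
      exact ⟨fun h => (lt_irrefl b (hb _ h.1)).elim, fun h => h.elim⟩
    simp only [N, this, ncard_empty, Nat.cast_zero]
  have hbl : b ∈ Ici l₀ := (hb _ hp₀).le
  let : TopologicalSpace (ZMod 2) := ⊥
  have : DiscreteTopology (ZMod 2) := ⟨rfl⟩
  have hcont : ContinuousOn k (Ici l₀) := by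
    intro l hl
    refine (tendsto_const_nhds (x := k l)).congr' ?_
    filter_upwards [hk l hl, self_mem_nhdsWithin] with l' h1 h2
    exact hParUnique l' h2 _ _ h1 (hkPar l' h2)
  have hconst := isPreconnected_Ici.constant hcont hbl (self_mem_Ici (a := l₀))
  rw [hParUnique b hbl _ _ (hkPar b hbl) hend,
    hParUnique l₀ self_mem_Ici _ _ (hkPar l₀ self_mem_Ici) hstart] at hconst
  exact zero_ne_one hconst

/-- Surjectivity of bounded operators between Banach spaces is an open condition. -/
theorem ContinuousLinearMap.eventually_surjective {X Y : Type*} [NormedAddCommGroup X]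
    [NormedSpace ℝ X] [CompleteSpace X] [NormedAddCommGroup Y] [NormedSpace ℝ Y] [CompleteSpace Y]
    {T : X →L[ℝ] Y} (hT : Function.Surjective T) :
    ∀ᶠ R in 𝓝 T, Function.Surjective (R : X →L[ℝ] Y) := by
  obtain ⟨s, hs⟩ := T.exists_nonlinearRightInverse_of_surjective (LinearMap.range_eq_top.2 hT)
  obtain ⟨c, hc0, hc⟩ := exists_between (inv_pos.2 hs)
  filter_upwards [Metric.ball_mem_nhds T (NNReal.coe_pos.2 hc0)] with R hR
  have happrox : ApproximatesLinearOn R T univ c := by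
    intro x _ y _
    have h1 : R x - R y - T (x - y) = (R - T) (x - y) := by simp
    rw [h1]
    refine (ContinuousLinearMap.le_opNorm _ _).trans ?_
    gcongr
    rw [← dist_eq_norm]
    exact (Metric.mem_ball.1 hR).le
  have hopen := happrox.open_image s isOpen_univ (Or.inr hc)
  rw [image_univ] at hopen
  have htop : LinearMap.range (R : X →ₗ[ℝ] Y) = ⊤ := by
    refine Submodule.eq_top_of_nonempty_interior' _ ⟨0, ?_⟩
    exact mem_interior.2 ⟨range R, subset_rfl, hopen, 0, map_zero R⟩
  exact LinearMap.range_eq_top.1 htop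

/-- A compact family of operators with finite codimensional range is transversal to a single finite
dimensional subspace, also on a neighbourhood. -/
theorem exists_finiteDimensional_transversal {Z X Y : Type*} [TopologicalSpace Z]
    [NormedAddCommGroup X] [NormedSpace ℝ X] [CompleteSpace X] [NormedAddCommGroup Y]
    [NormedSpace ℝ Y] [CompleteSpace Y] {T : Z → X →L[ℝ] Y} (hT : Continuous T)
    (hfin : ∀ z, FiniteDimensional ℝ (Y ⧸ LinearMap.range (T z : X →ₗ[ℝ] Y)))
    {Q : Set Z} (hQ : IsCompact Q) :
    ∃ V : Submodule ℝ Y, FiniteDimensional ℝ V ∧ ∃ U, IsOpen U ∧ Q ⊆ U ∧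
      ∀ z ∈ U, ∀ y, ∃ x, ∃ v ∈ V, T z x + v = y := by
  have hloc : ∀ z, ∃ V : Submodule ℝ Y, FiniteDimensional ℝ V ∧
      ∀ᶠ w in 𝓝 z, ∀ y, ∃ x, ∃ v ∈ V, T w x + v = y := by
    intro z
    obtain ⟨V, hV⟩ := Submodule.exists_isCompl (LinearMap.range (T z : X →ₗ[ℝ] Y))
    have := hfin z
    have hVfin : FiniteDimensional ℝ V :=
      (Submodule.quotientEquivOfIsCompl _ _ hV).finiteDimensional
    refine ⟨V, hVfin, ?_⟩
    have := FiniteDimensional.complete ℝ V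
    have hcont : Continuous fun w => (T w).coprod V.subtypeL := by fun_prop
    have hsurj : Function.Surjective ((T z).coprod V.subtypeL) := by
      intro y
      obtain ⟨_, ⟨x, rfl⟩, v, hv, hxv⟩ := Submodule.mem_sup.1
        (show y ∈ LinearMap.range (T z : X →ₗ[ℝ] Y) ⊔ V by rw [hV.sup_eq_top]; trivial)
      exact ⟨(x, ⟨v, hv⟩), hxv⟩
    filter_upwards [(hcont.tendsto z).eventually
      (ContinuousLinearMap.eventually_surjective hsurj)] with w hw y
    obtain ⟨⟨x, v⟩, hxv⟩ := hw y
    exact ⟨x, v, v.2, hxv⟩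
  choose V hV hev using hloc
  obtain ⟨t, -, ht⟩ := hQ.elim_nhds_subcover
    (fun z => interior {w | ∀ y, ∃ x, ∃ v ∈ V z, T w x + v = y})
    fun z _ => interior_mem_nhds.2 (hev z)
  refine ⟨⨆ z ∈ t, V z, ?_, _, isOpen_biUnion fun _ _ => isOpen_interior, ht, ?_⟩
  · have h := Submodule.finiteDimensional_finset_sup t V
    rwa [Finset.sup_eq_iSup] at h
  · intro w hw y
    obtain ⟨z, hz, hwz⟩ := mem_iUnion₂.1 hw
    obtain ⟨x, v, hv, hxv⟩ := interior_subset hwz y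
    exact ⟨x, v, (le_iSup₂ (f := fun z (_ : z ∈ t) => V z) z hz) hv, hxv⟩

/-- In a compact set, a connected component contained in an open set is contained in a relatively
clopen subset of that open set. -/
theorem IsCompact.exists_clopen_of_connectedComponentIn_subset {Z : Type*} [TopologicalSpace Z]
    [T2Space Z] {K U : Set Z} (hK : IsCompact K) {p : Z} (hp : p ∈ K) (hU : IsOpen U)
    (hsub : connectedComponentIn K p ⊆ U) :
    ∃ Q ⊆ K, IsCompact Q ∧ IsCompact (K \ Q) ∧ p ∈ Q ∧ Q ⊆ U := by
  have : CompactSpace K := isCompact_iff_compactSpace.1 hK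
  rw [connectedComponentIn_eq_image hp, image_subset_iff, connectedComponent_eq_iInter_isClopen]
    at hsub
  have : Nonempty { s : Set K // IsClopen s ∧ (⟨p, hp⟩ : K) ∈ s } :=
    ⟨univ, isClopen_univ, mem_univ _⟩
  obtain ⟨⟨s, hs, hps⟩, hsU⟩ := exists_subset_nhds_of_isCompact
    (V := fun s : { s : Set K // IsClopen s ∧ (⟨p, hp⟩ : K) ∈ s } => (s : Set K))
    (U := ((↑) : K → Z) ⁻¹' U)
    (fun a b => ⟨⟨a ∩ b, a.2.1.inter b.2.1, a.2.2, b.2.2⟩, inter_subset_left, inter_subset_right⟩)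
    (fun a => a.2.1.isClosed.isCompact)
    fun x hx => (hU.preimage continuous_subtype_val).mem_nhds (hsub hx)
  refine ⟨(↑) '' s, Subtype.coe_image_subset K s, hs.isClosed.isCompact.image
    continuous_subtype_val, ?_, ⟨_, hps, rfl⟩, image_subset_iff.2 hsU⟩
  have hcompl : K \ (↑) '' s = ((↑) : K → Z) '' sᶜ := by
    rw [image_compl_eq_range_sdiff_image Subtype.val_injective, Subtype.range_coe]
  rw [hcompl]
  exact hs.compl.isClosed.isCompact.image continuous_subtype_val

/-- The component of the zero set in the right half-space through the base point is unbounded. -/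
theorem not_isBounded_connectedComponentIn_zeros {X Y : Type*}
    [NormedAddCommGroup X] [NormedSpace ℝ X] [CompleteSpace X]
    [NormedAddCommGroup Y] [NormedSpace ℝ Y] [CompleteSpace Y]
    {F : ℝ × X → Y} (hF : ContDiff ℝ 1 F) {l₀ : ℝ} {u₀ : X}
    (hFred : ∀ l : ℝ, ∀ u : X, IsFredholmIndexZero (fderiv ℝ (fun v => F (l, v)) u))
    (hProper : ∀ B : Set (ℝ × X), IsClosed B → IsBounded B → ∀ K : Set Y, IsCompact K →
      IsCompact (B ∩ F ⁻¹' K))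
    (hUnique : ∀ u : X, F (l₀, u) = 0 ↔ u = u₀)
    (hBij : Function.Bijective (fderiv ℝ (fun v => F (l₀, v)) u₀)) :
    ¬ IsBounded (connectedComponentIn (F ⁻¹' {0} ∩ Ici l₀ ×ˢ univ) (l₀, u₀)) := by
  intro hb
  set Zp : Set (ℝ × X) := F ⁻¹' {0} ∩ Ici l₀ ×ˢ univ with hZp
  have hIci : IsClosed (Ici l₀ ×ˢ (univ : Set X)) := isClosed_Ici.prod isClosed_univ
  have hZpc : IsClosed Zp := (isClosed_singleton.preimage hF.continuous).inter hIci
  have hp₀ : (l₀, u₀) ∈ Zp := ⟨(hUnique u₀).2 rfl, self_mem_Ici, mem_univ _⟩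
  obtain ⟨R, hR⟩ := hb.subset_ball (0 : ℝ × X)
  have hKc : IsCompact (Zp ∩ Metric.closedBall 0 R) := by
    have h := (hProper (Metric.closedBall 0 R) Metric.isClosed_closedBall
      Metric.isBounded_closedBall {0} isCompact_singleton).inter_right hIci
    convert h using 1
    rw [hZp, inter_comm, inter_assoc]
  obtain ⟨Q, hQK, hQ, hKQ, hp₀Q, hQball⟩ := hKc.exists_clopen_of_connectedComponentIn_subset
    ⟨hp₀, Metric.ball_subset_closedBall (hR (mem_connectedComponentIn hp₀))⟩
    (Metric.isOpen_ball (x := (0 : ℝ × X)) (ε := R))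
    ((connectedComponentIn_mono _ inter_subset_left).trans hR)
  have hZQ : IsClosed (Zp \ Q) := by
    have h : Zp \ Q = ((Zp ∩ Metric.closedBall 0 R) \ Q) ∪ (Zp ∩ (Metric.ball 0 R)ᶜ) := by
      ext p
      constructor
      · rintro ⟨h1, h2⟩
        by_cases hpR : p ∈ Metric.closedBall 0 R
        · exact Or.inl ⟨⟨h1, hpR⟩, h2⟩
        · exact Or.inr ⟨h1, fun h => hpR (Metric.ball_subset_closedBall h)⟩
      · rintro (⟨⟨h1, _⟩, h2⟩ | ⟨h1, h2⟩)
        · exact ⟨h1, h2⟩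
        · exact ⟨h1, fun h => h2 (hQball h)⟩
    rw [h]
    exact hKQ.isClosed.union (hZpc.inter Metric.isOpen_ball.isClosed_compl)
  have hTcont : Continuous fun p : ℝ × X => fderiv ℝ (fun v => F (p.1, v)) p.2 := by
    have h : (fun p : ℝ × X => fderiv ℝ (fun v => F (p.1, v)) p.2) =
        fun p => (fderiv ℝ F p).comp (ContinuousLinearMap.inr ℝ ℝ X) := by
      ext1 p
      exact ((hF.differentiable one_ne_zero (p.1, p.2)).hasFDerivAt.comp p.2
        (hasFDerivAt_prodMk_right p.1 p.2)).fderiv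
    rw [h]
    exact (hF.continuous_fderiv one_ne_zero).clm_comp continuous_const
  obtain ⟨V, hVfin, U, hU, hQU, hUV⟩ := exists_finiteDimensional_transversal hTcont
    (fun p => (hFred p.1 p.2).2.2.1) hQ
  let φ : V ≃L[ℝ] (Fin (Module.finrank ℝ V) → ℝ) :=
    ContinuousLinearEquiv.ofFinrankEq (by simp)
  obtain ⟨π, hπ⟩ := Submodule.ClosedComplemented.of_finiteDimensional (𝕜 := ℝ) V
  let J : (Fin (Module.finrank ℝ V) → ℝ) →L[ℝ] Y :=
    V.subtypeL.comp (φ.symm : (Fin (Module.finrank ℝ V) → ℝ) →L[ℝ] V)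
  let P : Y →L[ℝ] (Fin (Module.finrank ℝ V) → ℝ) :=
    (φ : V →L[ℝ] (Fin (Module.finrank ℝ V) → ℝ)).comp π
  have hPJ : ∀ e, P (J e) = e := fun e => by simp [P, J, hπ]
  obtain ⟨δ, hδ, hδU⟩ := hQ.exists_cthickening_subset_open (hZQ.isOpen_compl.inter hU)
    (fun p hp => ⟨fun h => h.2 hp, hQU hp⟩ : Q ⊆ (Zp \ Q)ᶜ ∩ U)
  set B := Metric.cthickening δ Q with hB
  set O := Metric.thickening δ Q with hO
  have hOB : O ⊆ B := Metric.thickening_subset_cthickening δ Q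
  have hQO : Q ⊆ O := Metric.self_subset_thickening hδ Q
  have hBb : IsBounded B := hQ.isBounded.cthickening
  set D := (B ∩ F ⁻¹' (J '' Metric.closedBall 0 1)) ∩ Ici l₀ ×ˢ univ with hD
  have hDc : IsCompact D := (hProper B Metric.isClosed_cthickening hBb _
    ((isCompact_closedBall 0 1).image J.continuous)).inter_right hIci
  have hDO : IsCompact (D \ O) := hDc.diff Metric.isOpen_thickening
  have hpos : ∀ p ∈ D \ O, 0 < ‖P (F p)‖ := by
    rintro p ⟨⟨⟨hpB, e, -, he⟩, hpl⟩, hpO⟩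
    refine norm_pos_iff.2 fun h0 => hpO (hQO ?_)
    rw [← he, hPJ] at h0
    rw [h0, map_zero] at he
    by_contra hpQ
    exact (hδU hpB).1 ⟨⟨he.symm, hpl⟩, hpQ⟩
  have hPF : Continuous fun p => ‖P (F p)‖ := (P.continuous.comp hF.continuous).norm
  obtain ⟨ε, hε, hε1, hεD⟩ : ∃ ε > 0, ε ≤ 1 ∧ ∀ p ∈ D \ O, ε < ‖P (F p)‖ := by
    rcases (D \ O).eq_empty_or_nonempty with hemp | hne
    · exact ⟨1, one_pos, le_rfl, fun p hp => by simp [hemp] at hp⟩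
    · obtain ⟨q, hq, hmin⟩ := hDO.exists_isMinOn hne hPF.continuousOn
      refine ⟨min 1 (‖P (F q)‖ / 2), lt_min one_pos (half_pos (hpos q hq)), min_le_left _ _,
        fun p hp => ?_⟩
      have h1 : ‖P (F q)‖ ≤ ‖P (F p)‖ := hmin hp
      linarith [min_le_right 1 (‖P (F q)‖ / 2), hpos q hq]
  refine false_of_isCompact_of_unique_zero hF hFred hUnique hBij hPJ Metric.isOpen_thickening
    (hBb.subset hOB) (hQO hp₀Q) ?_ hε ?_
  · intro l u hlu y
    obtain ⟨x, v, hv, hxv⟩ := hUV (l, u) (hδU (hOB hlu)).2 y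
    exact ⟨x, φ ⟨v, hv⟩, by simpa [J] using hxv⟩
  · convert hDc.inter_right (isClosed_Iic.preimage hPF : IsClosed ((fun p => ‖P (F p)‖) ⁻¹' Iic ε))
      using 1
    ext p
    constructor
    · rintro ⟨hpO, hpl, ⟨e, he⟩, hpε⟩
      refine ⟨⟨⟨hOB hpO, e, ?_, he⟩, hpl, mem_univ _⟩, hpε⟩
      rw [← he, hPJ] at hpε
      simpa using hpε.trans hε1
    · rintro ⟨hpD, hpε⟩
      refine ⟨?_, hpD.2.1, ?_, hpε⟩
      · by_contra hpO
        exact (hεD p ⟨hpD, hpO⟩).not_ge hpε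
      · obtain ⟨e, -, he⟩ := hpD.1.2
        exact ⟨e, he⟩

/-- Global continuation theorem for `C¹` Fredholm maps (Theorem 1). -/
theorem global_continuation_fredholm {X Y : Type*}
    [NormedAddCommGroup X] [NormedSpace ℝ X] [CompleteSpace X]
    [NormedAddCommGroup Y] [NormedSpace ℝ Y] [CompleteSpace Y]
    (F : ℝ × X → Y) (hF : ContDiff ℝ 1 F)
    (l₀ : ℝ) (u₀ : X)
    (hFred : ∀ l : ℝ, ∀ u : X, IsFredholmIndexZero (fderiv ℝ (fun v => F (l, v)) u))
    (hProper : ∀ B : Set (ℝ × X), IsClosed B → IsBounded B → ∀ K : Set Y, IsCompact K →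
      IsCompact (B ∩ F ⁻¹' K))
    (hUnique : ∀ u : X, F (l₀, u) = 0 ↔ u = u₀)
    (hBij : Function.Bijective (fderiv ℝ (fun v => F (l₀, v)) u₀)) :
    let S : Set (ℝ × X) :=
      closure {p : ℝ × X | F p = 0 ∧ p ≠ (l₀, u₀)} ∪ {(l₀, u₀)}
    let Cp : Set (ℝ × X) :=
      connectedComponentIn (S ∩ (Set.Ici l₀ ×ˢ (Set.univ : Set X))) (l₀, u₀)
    let Cm : Set (ℝ × X) :=
      connectedComponentIn (S ∩ (Set.Iic l₀ ×ˢ (Set.univ : Set X))) (l₀, u₀)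
    ¬ IsBounded Cp ∧ ¬ IsBounded Cm ∧ Cp ∩ Cm = {(l₀, u₀)} := by
  intro S Cp Cm
  have hzero : F (l₀, u₀) = 0 := (hUnique u₀).2 rfl
  have hS : S = F ⁻¹' {0} := by
    apply Subset.antisymm
    · refine union_subset (closure_minimal (fun p hp => hp.1)
        (isClosed_singleton.preimage hF.continuous)) ?_
      rintro _ rfl
      exact hzero
    · intro p hp
      by_cases h : p = (l₀, u₀)
      · exact Or.inr h
      · exact Or.inl (subset_closure ⟨hp, h⟩)
  refine ⟨?_, ?_, ?_⟩
  · have h := not_isBounded_connectedComponentIn_zeros hF hFred hProper hUnique hBij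
    rwa [← hS] at h
  · intro hb
    let ρ : ℝ × X → ℝ × X := fun p => (2 * l₀ - p.1, p.2)
    have hρ : ContDiff ℝ 1 ρ := (contDiff_const.sub contDiff_fst).prodMk contDiff_snd
    have hρρ : ∀ p, ρ (ρ p) = p := fun p => Prod.ext (by simp [ρ]) rfl
    have hl₀ : 2 * l₀ - l₀ = l₀ := by ring
    have hρ₀ : ρ (l₀, u₀) = (l₀, u₀) := Prod.ext hl₀ rfl
    have hbound : ∀ A : Set (ℝ × X), IsBounded A → IsBounded (ρ ⁻¹' A) := by
      intro A hA
      obtain ⟨R, hR⟩ := hA.exists_norm_le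
      refine isBounded_iff_forall_norm_le.2 ⟨|2 * l₀| + R, fun p hp => ?_⟩
      have h1 : p = (2 * l₀, 0) + (-(ρ p).1, (ρ p).2) := Prod.ext (by simp [ρ]) (by simp [ρ])
      have h2 : ‖((2 * l₀, 0) : ℝ × X)‖ = |2 * l₀| := by simp [Prod.norm_def]
      have h3 : ‖((-(ρ p).1, (ρ p).2) : ℝ × X)‖ = ‖ρ p‖ := by simp only [Prod.norm_def, norm_neg]
      calc ‖p‖ ≤ ‖((2 * l₀, 0) : ℝ × X)‖ + ‖((-(ρ p).1, (ρ p).2) : ℝ × X)‖ := by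
            conv_lhs => rw [h1]
            exact norm_add_le _ _
        _ ≤ |2 * l₀| + R := by rw [h2, h3]; linarith [hR _ hp]
    have h := not_isBounded_connectedComponentIn_zeros (F := F ∘ ρ) (l₀ := l₀) (u₀ := u₀)
      (hF.comp hρ) (fun l u => hFred (2 * l₀ - l) u) ?_ ?_ ?_
    · refine h ((hbound Cm hb).subset fun p hp => ?_)
      have hp₀ : (l₀, u₀) ∈ (F ∘ ρ) ⁻¹' {0} ∩ Ici l₀ ×ˢ univ :=
        ⟨by simp [hρ₀, hzero], self_mem_Ici, mem_univ _⟩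
      have himg : ρ '' connectedComponentIn ((F ∘ ρ) ⁻¹' {0} ∩ Ici l₀ ×ˢ univ) (l₀, u₀) ⊆ Cm := by
        refine (isPreconnected_connectedComponentIn.image ρ
          hρ.continuous.continuousOn).subset_connectedComponentIn
          ⟨_, mem_connectedComponentIn hp₀, hρ₀⟩ ?_
        rintro _ ⟨q, hq, rfl⟩
        have hq' := connectedComponentIn_subset _ _ hq
        refine ⟨hS ▸ hq'.1, ?_, mem_univ _⟩
        have : l₀ ≤ q.1 := hq'.2.1
        change 2 * l₀ - q.1 ≤ l₀
        linarith
      exact himg ⟨p, hp, rfl⟩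
    · intro B hB hBb K hK
      have himg : B ∩ F ∘ ρ ⁻¹' K = ρ '' (ρ ⁻¹' B ∩ F ⁻¹' K) := by
        ext p
        constructor
        · rintro ⟨h1, h2⟩
          exact ⟨ρ p, ⟨by rwa [mem_preimage, hρρ], h2⟩, hρρ p⟩
        · rintro ⟨q, ⟨h1, h2⟩, rfl⟩
          exact ⟨h1, by rwa [mem_preimage, Function.comp_apply, hρρ]⟩
      rw [himg]
      exact (hProper (ρ ⁻¹' B) (hB.preimage hρ.continuous) (hbound B hBb) K hK).image
        hρ.continuous
    · intro u
      simp only [Function.comp_apply, ρ, hl₀, hUnique]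
    · simpa only [Function.comp_apply, ρ, hl₀] using hBij
  · have hmem : (l₀, u₀) ∈ S := Or.inr rfl
    apply Subset.antisymm
    · rintro ⟨l, u⟩ ⟨h1, h2⟩
      have h1' := connectedComponentIn_subset _ _ h1
      have h2' := connectedComponentIn_subset _ _ h2
      obtain rfl : l = l₀ := le_antisymm h2'.2.1 h1'.2.1
      have hu : F (l, u) = 0 := by
        have := h1'.1
        rwa [hS] at this
      rw [(hUnique u).1 hu]
      rfl
    · rintro _ rfl
      exact ⟨mem_connectedComponentIn ⟨hmem, self_mem_Ici, mem_univ _⟩,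
        mem_connectedComponentIn ⟨hmem, self_mem_Iic, mem_univ _⟩⟩
end

section
/- Let X and Y be real Banach spaces, let Z be a connected topological space, and let T : Z → L(X,Y) be continuous with respect to the operator norm on the space L(X,Y) of bounded linear operators. Suppose that for every z ∈ Z the operator T(z) is Fredholm, i.e. its kernel is finite-dimensional and its range is closed with finite codimension in Y, and suppose that for some z₀ ∈ Z the operator T(z₀) has Fredholm index 0. Then T(z) has Fredholm index 0 for every z ∈ Z. -/
open Set

/-- A bounded linear operator between real normed spaces is Fredholm: its kernel is finite
dimensional and its range is closed with finite codimension. -/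
def IsFredholm {X Y : Type*} [NormedAddCommGroup X] [NormedSpace ℝ X]
    [NormedAddCommGroup Y] [NormedSpace ℝ Y] (T : X →L[ℝ] Y) : Prop :=
  FiniteDimensional ℝ (LinearMap.ker (T : X →ₗ[ℝ] Y)) ∧
  IsClosed (LinearMap.range (T : X →ₗ[ℝ] Y) : Set Y) ∧
  FiniteDimensional ℝ (Y ⧸ LinearMap.range (T : X →ₗ[ℝ] Y))

open Filter Topology

/-- If `f` is injective on a subspace `p` of finite codimension and `p.map f` has finite
codimension, then the index of `f` is `codim p - codim (p.map f)`. -/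
theorem LinearMap.finrank_ker_sub_finrank_coker_eq {K V W : Type*} [Field K]
    [AddCommGroup V] [Module K V] [AddCommGroup W] [Module K W] (f : V →ₗ[K] W)
    (p : Submodule K V) [FiniteDimensional K (V ⧸ p)] [FiniteDimensional K (W ⧸ p.map f)]
    (hp : Disjoint (LinearMap.ker f) p) :
    (Module.finrank K (LinearMap.ker f) : ℤ) - Module.finrank K (W ⧸ LinearMap.range f) =
      Module.finrank K (V ⧸ p) - Module.finrank K (W ⧸ p.map f) := by
  let g : (V ⧸ p) →ₗ[K] (W ⧸ p.map f) := p.mapQ (p.map f) f (Submodule.le_comap_map f p)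
  have hrange : LinearMap.range g = (LinearMap.range f).map (p.map f).mkQ := by
    rw [← LinearMap.range_comp, ← p.mapQ_mkQ (p.map f) f (h := Submodule.le_comap_map f p),
      LinearMap.range_comp, Submodule.range_mkQ, Submodule.map_top]
  have hcoker : Module.finrank K ((W ⧸ p.map f) ⧸ LinearMap.range g) =
      Module.finrank K (W ⧸ LinearMap.range f) := by
    rw [hrange]
    exact (Submodule.quotientQuotientEquivQuotient _ _ LinearMap.map_le_range).finrank_eq
  let k : LinearMap.ker f →ₗ[K] LinearMap.ker g :=
    (p.mkQ.comp (LinearMap.ker f).subtype).codRestrict (LinearMap.ker g) (by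
      rintro ⟨x, hx⟩
      simp [g, LinearMap.mem_ker.mp hx])
  have hk : Function.Bijective k := by
    constructor
    · rw [injective_iff_map_eq_zero]
      rintro ⟨x, hx⟩ hkx
      have hxp : x ∈ p := by simpa [k, Subtype.ext_iff] using hkx
      exact Subtype.ext (Submodule.disjoint_def.mp hp x hx hxp)
    · rintro ⟨y, hy⟩
      obtain ⟨x, rfl⟩ := p.mkQ_surjective y
      obtain ⟨w, hw, hwx⟩ : f x ∈ p.map f := by simpa [g] using hy
      refine ⟨⟨x - w, by simp [hwx]⟩, Subtype.ext ?_⟩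
      simpa [k] using hw
  have hker : Module.finrank K (LinearMap.ker f) = Module.finrank K (LinearMap.ker g) :=
    (LinearEquiv.ofBijective k hk).finrank_eq
  have h1 := LinearMap.finrank_range_add_finrank_ker g
  have h2 := Submodule.finrank_quotient_add_finrank (LinearMap.range g)
  omega

/-- The index is constant on a neighbourhood of a Fredholm operator between Banach spaces. -/
theorem IsFredholm.eventually_index_eq {X Y : Type*}
    [NormedAddCommGroup X] [NormedSpace ℝ X] [CompleteSpace X]
    [NormedAddCommGroup Y] [NormedSpace ℝ Y] [CompleteSpace Y]
    {T : X →L[ℝ] Y} (hT : IsFredholm T) :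
    ∀ᶠ S : X →L[ℝ] Y in 𝓝 T,
      (Module.finrank ℝ (LinearMap.ker (S : X →ₗ[ℝ] Y)) : ℤ) -
          Module.finrank ℝ (Y ⧸ LinearMap.range (S : X →ₗ[ℝ] Y)) =
        Module.finrank ℝ (LinearMap.ker (T : X →ₗ[ℝ] Y)) -
          Module.finrank ℝ (Y ⧸ LinearMap.range (T : X →ₗ[ℝ] Y)) := by
  obtain ⟨hker, -, hcoker⟩ := hT
  obtain ⟨p, hp_closed, hp⟩ := (Submodule.ClosedComplemented.of_finiteDimensional
    (LinearMap.ker (T : X →ₗ[ℝ] Y))).exists_isClosed_isCompl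
  obtain ⟨q, hq⟩ := (LinearMap.range (T : X →ₗ[ℝ] Y)).exists_isCompl
  have : CompleteSpace p := hp_closed.completeSpace_coe
  have : FiniteDimensional ℝ q := (Submodule.quotientEquivOfIsCompl _ _ hq).finiteDimensional
  have : FiniteDimensional ℝ (X ⧸ p) :=
    (Submodule.quotientEquivOfIsCompl _ _ hp.symm).symm.finiteDimensional
  have : CompleteSpace q := FiniteDimensional.complete ℝ q
  let Φ : (X →L[ℝ] Y) → (p × q →L[ℝ] Y) := fun S ↦ (S.comp p.subtypeL).coprod q.subtypeL
  have hΦ_apply (S : X →L[ℝ] Y) (x : p) (y : q) : Φ S (x, y) = S x + y := rfl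
  have hΦ : Continuous Φ := by
    have h (S : X →L[ℝ] Y) : Φ S = S.comp (p.subtypeL.comp (.fst ℝ p q)) +
        q.subtypeL.comp (.snd ℝ p q) := rfl
    simp only [funext h]
    fun_prop
  have index_eq (S : X →L[ℝ] Y) (hS : Function.Bijective (Φ S)) :
      (Module.finrank ℝ (LinearMap.ker (S : X →ₗ[ℝ] Y)) : ℤ) -
          Module.finrank ℝ (Y ⧸ LinearMap.range (S : X →ₗ[ℝ] Y)) =
        Module.finrank ℝ (X ⧸ p) - Module.finrank ℝ q := by
    have hdisj : Disjoint (LinearMap.ker (S : X →ₗ[ℝ] Y)) p := by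
      refine Submodule.disjoint_def.mpr fun x hx hxp ↦ ?_
      have : ((⟨x, hxp⟩, 0) : p × q) = 0 := hS.1 (by
        have : S x = 0 := hx
        simp [hΦ_apply, this])
      simpa using this
    have hcompl : IsCompl (p.map (S : X →ₗ[ℝ] Y)) q := by
      constructor
      · rw [Submodule.disjoint_def]
        rintro _ ⟨x, hxp, rfl⟩ hxq
        have : ((⟨x, hxp⟩, -⟨S x, hxq⟩) : p × q) = 0 := hS.1 (by simp [hΦ_apply])
        have hx : x = 0 := by simpa using congr(($this).1.1)
        simp [hx]
      · rw [codisjoint_iff, Submodule.eq_top_iff']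
        intro y
        obtain ⟨⟨x, z⟩, rfl⟩ := hS.2 y
        exact Submodule.add_mem_sup ⟨x, x.2, rfl⟩ z.2
    let e := Submodule.quotientEquivOfIsCompl _ _ hcompl
    have : FiniteDimensional ℝ (Y ⧸ p.map (S : X →ₗ[ℝ] Y)) := e.symm.finiteDimensional
    rw [LinearMap.finrank_ker_sub_finrank_coker_eq _ p hdisj, e.finrank_eq]
  have hΦT : Function.Bijective (Φ T) := by
    constructor
    · rw [injective_iff_map_eq_zero]
      rintro ⟨x, y⟩ hxy
      have hxy : T x + y = 0 := hxy
      have hTx : T x = 0 := Submodule.disjoint_def.mp hq.disjoint _ ⟨x, rfl⟩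
        (by rw [eq_neg_of_add_eq_zero_left hxy]; exact q.neg_mem y.2)
      have hx : (x : X) = 0 := Submodule.disjoint_def.mp hp.disjoint _ hTx x.2
      have hy : (y : Y) = 0 := by simpa [hTx] using hxy
      exact Prod.ext (Subtype.ext hx) (Subtype.ext hy)
    · intro y
      obtain ⟨_, ⟨x, rfl⟩, b, hb, rfl⟩ :=
        Submodule.mem_sup.mp (hq.sup_eq_top ▸ Submodule.mem_top : y ∈ _ ⊔ q)
      obtain ⟨c, hc, d, hd, rfl⟩ :=
        Submodule.mem_sup.mp (hp.sup_eq_top ▸ Submodule.mem_top : x ∈ _ ⊔ p)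
      have hc : T c = 0 := hc
      exact ⟨(⟨d, hd⟩, ⟨b, hb⟩), by simp [hΦ_apply, hc]⟩
  let e := ContinuousLinearEquiv.ofBijective (Φ T) (LinearMap.ker_eq_bot.mpr hΦT.1)
    (LinearMap.range_eq_top.mpr hΦT.2)
  filter_upwards [hΦ.continuousAt.preimage_mem_nhds (e.nhds : _ ∈ 𝓝 (Φ T))] with S ⟨e', he'⟩
  rw [index_eq T hΦT, index_eq S (he' ▸ e'.bijective)]

/-- The Fredholm index `dim ker T - codim range T` is locally constant, hence constant along a
continuous family of Fredholm operators parametrized by a connected space: if the index is `0`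
at one parameter value, it is `0` everywhere. -/
theorem index_zero_of_connected {X Y : Type*}
    [NormedAddCommGroup X] [NormedSpace ℝ X] [CompleteSpace X]
    [NormedAddCommGroup Y] [NormedSpace ℝ Y] [CompleteSpace Y]
    {Z : Type*} [TopologicalSpace Z] [ConnectedSpace Z]
    (T : Z → X →L[ℝ] Y) (hT : Continuous T)
    (hFred : ∀ z : Z, IsFredholm (T z))
    (z₀ : Z)
    (h0 : (Module.finrank ℝ (LinearMap.ker (T z₀ : X →ₗ[ℝ] Y)) : ℤ) -
        (Module.finrank ℝ (Y ⧸ LinearMap.range (T z₀ : X →ₗ[ℝ] Y)) : ℤ) = 0) :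
    ∀ z : Z, (Module.finrank ℝ (LinearMap.ker (T z : X →ₗ[ℝ] Y)) : ℤ) -
        (Module.finrank ℝ (Y ⧸ LinearMap.range (T z : X →ₗ[ℝ] Y)) : ℤ) = 0 := by
  have hloc : IsLocallyConstant fun z ↦
      (Module.finrank ℝ (LinearMap.ker (T z : X →ₗ[ℝ] Y)) : ℤ) -
        (Module.finrank ℝ (Y ⧸ LinearMap.range (T z : X →ₗ[ℝ] Y)) : ℤ) :=
    (IsLocallyConstant.iff_eventually_eq _).mpr fun z ↦
      hT.continuousAt.eventually (hFred z).eventually_index_eq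
  exact fun z ↦ (hloc.apply_eq_of_preconnectedSpace z z₀).trans h0
end
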